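/- arXiv:1205.2987 — 5 statements merged into one kernel-verified Lean document; each statement's English description precedes it below -/
import Mathlib

section
/- Let (X, 𝒜, μ) be a measure space, U an open subset of ℂ, and f : X × U → ℂ a function such that: (1) for every z ∈ U the function t ↦ f(t,z) is measurable; (2) for every t ∈ X the function z ↦ f(t,z) is holomorphic on U; (3) there exists a subset E ⊆ U, discrete in U, such that for every compact subset K ⊆ U ∖ E there is an integrable function g_K ∈ L¹(μ) with |f(t,z)| ≤ g_K(t) for all (t,z) ∈ X × K. Then for every z ∈ U (including the points of E) the integral ∫_X f(t,z) dμ(t) is absolutely convergent, and the function z ↦ ∫_X f(t,z) dμ(t) is holomorphic on all of U. -/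
open MeasureTheory

/-- A set which meets a neighborhood of `z` in at most one point is avoided by arbitrarily small
circles centered at `z`. -/
lemma exists_closedBall_subset_disjoint_sphere {z : ℂ} {U V E : Set ℂ} (hU : U ∈ nhds z)
    (hV : V ∈ nhds z) (hE : (V ∩ E).Subsingleton) :
    ∃ r > 0, Metric.closedBall z r ⊆ U ∧ Disjoint (Metric.sphere z r) E := by
  obtain ⟨R, hR, hsub⟩ := Metric.nhds_basis_closedBall.mem_iff.1 (Filter.inter_mem hU hV)
  have hhalf : Metric.closedBall z (R / 2) ⊆ Metric.closedBall z R :=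
    Metric.closedBall_subset_closedBall (by linarith)
  by_cases h : Disjoint (Metric.sphere z R) E
  · exact ⟨R, hR, fun w hw => (hsub hw).1, h⟩
  · obtain ⟨a, haR, haE⟩ := Set.not_disjoint_iff.1 h
    refine ⟨R / 2, by positivity, fun w hw => (hsub (hhalf hw)).1,
      Set.disjoint_left.2 fun b hb hbE => ?_⟩
    have hab : a = b := hE ⟨(hsub (Metric.sphere_subset_closedBall haR)).2, haE⟩
      ⟨(hsub (hhalf (Metric.sphere_subset_closedBall hb))).2, hbE⟩
    subst hab
    rw [Metric.mem_sphere] at haR hb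
    linarith

/-- The derivative of a parametric family is measurable in the parameter. -/
lemma measurable_deriv_of_differentiableAt {X : Type*} [MeasurableSpace X] {f : X → ℂ → ℂ}
    {U : Set ℂ} {z : ℂ} (hU : U ∈ nhds z) (hmeas : ∀ w ∈ U, Measurable fun t => f t w)
    (hf : ∀ t, DifferentiableAt ℂ (f t) z) : Measurable fun t => deriv (f t) z := by
  classical
  refine measurable_of_tendsto_metrizable' (nhdsWithin z {z}ᶜ)
    (f := fun w t => if w ∈ U then slope (f t) z w else 0) (fun w => ?_)
    (tendsto_pi_nhds.2 fun t => ?_)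
  · by_cases hw : w ∈ U
    · simp only [hw, if_true, slope_def_field]
      exact ((hmeas w hw).sub (hmeas z (mem_of_mem_nhds hU))).div_const _
    · simp [hw]
  · refine (hasDerivAt_iff_tendsto_slope.1 (hf t).hasDerivAt).congr' ?_
    filter_upwards [nhdsWithin_le_nhds hU] with w hw
    simp [hw]

/-- A parametric integral of holomorphic functions, dominated on a circle, is differentiable at
the center of the circle. -/
lemma integrable_and_differentiableAt_integral_of_sphere_bound {X : Type*} [MeasurableSpace X]
    {μ : Measure X} {f : X → ℂ → ℂ} {g : X → ℝ} {z : ℂ} {r : ℝ} (hr : 0 < r)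
    (hmeas : ∀ w ∈ Metric.closedBall z r, Measurable fun t => f t w)
    (hf : ∀ t, DifferentiableOn ℂ (f t) (Metric.closedBall z r)) (hg : Integrable g μ)
    (hfg : ∀ t, ∀ w ∈ Metric.sphere z r, ‖f t w‖ ≤ g t) :
    Integrable (fun t => f t z) μ ∧ DifferentiableAt ℂ (fun w => ∫ t, f t w ∂μ) z := by
  have hbound : ∀ t, ∀ w ∈ Metric.closedBall z r, ‖f t w‖ ≤ g t := fun t w hw => by
    refine Complex.norm_le_of_forall_mem_frontier_norm_le Metric.isBounded_ball
      ((hf t).diffContOnCl_ball subset_rfl) (C := g t) (fun v hv => ?_) ?_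
    · exact hfg t v (by rwa [frontier_ball z hr.ne'] at hv)
    · rwa [closure_ball z hr.ne']
  have hz : z ∈ Metric.closedBall z r := Metric.mem_closedBall_self hr.le
  have hnhds : Metric.closedBall z r ∈ nhds z := Metric.closedBall_mem_nhds z hr
  have hint : Integrable (fun t => f t z) μ :=
    hg.mono' (hmeas z hz).aestronglyMeasurable (.of_forall fun t => hbound t z hz)
  have hsub : ∀ w ∈ Metric.ball z (r / 2),
      Metric.closedBall w (r / 2) ⊆ Metric.closedBall z r := fun w hw =>
    Metric.closedBall_subset_closedBall' (by rw [Metric.mem_ball] at hw; linarith)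
  refine ⟨hint, (hasDerivAt_integral_of_dominated_loc_of_deriv_le
    (F' := fun w t => deriv (f t) w) (bound := fun t => g t / (r / 2))
    (Metric.ball_mem_nhds z (half_pos hr)) ?_ hint ?_ ?_ (hg.div_const _) ?_).2.differentiableAt⟩
  · filter_upwards [hnhds] with w hw using (hmeas w hw).aestronglyMeasurable
  · exact (measurable_deriv_of_differentiableAt hnhds hmeas
      fun t => (hf t).differentiableAt hnhds).aestronglyMeasurable
  · exact .of_forall fun t w hw => Complex.norm_deriv_le_of_forall_mem_sphere_norm_le
      (half_pos hr) ((hf t).diffContOnCl_ball (hsub w hw))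
      fun v hv => hbound t v (hsub w hw (Metric.sphere_subset_closedBall hv))
  · exact .of_forall fun t w hw => ((hf t).differentiableAt
      (Filter.mem_of_superset (Metric.closedBall_mem_nhds w (half_pos hr)) (hsub w hw))).hasDerivAt

/-- Holomorphy of a parametric integral dominated off a discrete set. -/
theorem stmt_0 {X : Type*} [MeasurableSpace X] (μ : Measure X)
    (U : Set ℂ) (hU : IsOpen U) (f : X → ℂ → ℂ)
    (hmeas : ∀ z ∈ U, Measurable fun t => f t z)
    (hholo : ∀ t : X, DifferentiableOn ℂ (f t) U)
    (hdom : ∃ E : Set ℂ, E ⊆ U ∧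
      (∀ z ∈ U, ∃ V ∈ nhds z, (V ∩ E).Subsingleton) ∧
      ∀ K : Set ℂ, K ⊆ U \ E → IsCompact K →
        ∃ g : X → ℝ, Integrable g μ ∧ ∀ t : X, ∀ z ∈ K, ‖f t z‖ ≤ g t) :
    (∀ z ∈ U, Integrable (fun t => f t z) μ) ∧
      DifferentiableOn ℂ (fun z => ∫ t, f t z ∂μ) U := by
  obtain ⟨E, -, hdisc, hdom⟩ := hdom
  have key : ∀ z ∈ U, Integrable (fun t => f t z) μ ∧
      DifferentiableAt ℂ (fun w => ∫ t, f t w ∂μ) z := fun z hz => by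
    obtain ⟨V, hV, hVE⟩ := hdisc z hz
    obtain ⟨r, hr, hrU, hrE⟩ :=
      exists_closedBall_subset_disjoint_sphere (hU.mem_nhds hz) hV hVE
    obtain ⟨g, hg, hfg⟩ := hdom (Metric.sphere z r)
      (fun w hw => ⟨hrU (Metric.sphere_subset_closedBall hw), Set.disjoint_left.1 hrE hw⟩)
      (isCompact_sphere z r)
    exact integrable_and_differentiableAt_integral_of_sphere_bound hr
      (fun w hw => hmeas w (hrU hw)) (fun t => (hholo t).mono hrU) hg hfg
  exact ⟨fun z hz => (key z hz).1, fun z hz => (key z hz).2.differentiableWithinAt⟩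
end

section
/- For all v', v'' ∈ V the endomorphism c(v',v'') is skew-hermitian, i.e. belongs to 𝔲(V,h), and the elements c(v',v''), for v', v'' ranging over V, span 𝔲(V,h) as an F-vector space. -/
/-- Every linear functional on a nondegenerate hermitian space is of the form `h(·, a)`. -/
theorem exists_eq_hermitian_right {F E V : Type*} [Field F] [Field E] [Algebra F E]
    [FiniteDimensional F E] (σ : E ≃ₐ[F] E)
    [AddCommGroup V] [Module E V] [Module F V] [IsScalarTower F E V] [FiniteDimensional E V]
    (hm : V → V → E)
    (haddl : ∀ u u' v : V, hm (u + u') v = hm u v + hm u' v)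
    (hsmull : ∀ (a : E) (u v : V), hm (a • u) v = a * hm u v)
    (hconj : ∀ u v : V, hm v u = σ (hm u v))
    (hnd : ∀ u : V, (∀ v : V, hm u v = 0) → u = 0)
    (f : Module.Dual E V) : ∃ a : V, ∀ v : V, f v = hm v a := by
  let L : V →ₗ[F] Module.Dual E V :=
    { toFun := fun a =>
        { toFun := fun v => hm v a
          map_add' := fun u u' => haddl u u' a
          map_smul' := fun r u => hsmull r u a }
      map_add' := fun a b => by
        ext v
        simp [hconj _ v, haddl]
      map_smul' := fun r a => by
        ext v
        change hm v (r • a) = r • hm v a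
        rw [hconj _ v, hconj a v, ← algebraMap_smul E r a, hsmull, map_mul, σ.commutes,
          Algebra.smul_def] }
  have : FiniteDimensional F V := Module.Finite.trans E V
  have : FiniteDimensional F (Module.Dual E V) := Module.Finite.trans E _
  have hfinrank : Module.finrank F V = Module.finrank F (Module.Dual E V) := by
    rw [← Module.finrank_mul_finrank F E V, ← Module.finrank_mul_finrank F E (Module.Dual E V),
      Subspace.dual_finrank_eq]
  have hinj : Function.Injective L := by
    refine (injective_iff_map_eq_zero L).2 fun a ha => hnd a fun v => ?_
    have hv : hm v a = 0 := LinearMap.congr_fun ha v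
    rw [hconj v a, hv, map_zero]
  obtain ⟨a, ha⟩ := (LinearMap.injective_iff_surjective_of_finrank_eq_finrank hfinrank).1 hinj f
  exact ⟨a, fun v => (LinearMap.congr_fun ha v).symm⟩

/-- the maps `c(v',v'')` are skew-hermitian and span the unitary Lie
algebra `𝔲(V,h)` as an `F`-vector space. -/
theorem stmt_1 (F E : Type*) [Field F] [CharZero F] [Field E] [Algebra F E]
    (hquad : Module.finrank F E = 2)
    (σ : E ≃ₐ[F] E) (hσnt : ∃ x : E, σ x ≠ x)
    (V : Type*) [AddCommGroup V] [Module E V] [Module F V] [IsScalarTower F E V]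
    [FiniteDimensional E V]
    (hm : V → V → E)
    (haddl : ∀ u u' v : V, hm (u + u') v = hm u v + hm u' v)
    (hsmull : ∀ (a : E) (u v : V), hm (a • u) v = a * hm u v)
    (hconj : ∀ u v : V, hm v u = σ (hm u v))
    (hnd : ∀ u : V, (∀ v : V, hm u v = 0) → u = 0)
    (c : V → V → V →ₗ[E] V)
    (hc : ∀ v' v'' v : V, c v' v'' v = hm v v' • v'' - hm v v'' • v') :
    (∀ v' v'' u v : V, hm (c v' v'' u) v + hm u (c v' v'' v) = 0) ∧
    (Submodule.span F (Set.range fun p : V × V => c p.1 p.2) : Set (V →ₗ[E] V)) =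
      {X : V →ₗ[E] V | ∀ u v : V, hm (X u) v + hm u (X v) = 0} := by
  have haddr (u v v' : V) : hm u (v + v') = hm u v + hm u v' := by
    rw [hconj _ u, haddl, map_add, ← hconj, ← hconj]
  have hsmulr (a : E) (u v : V) : hm u (a • v) = σ a * hm u v := by
    rw [hconj _ u, hsmull, map_mul, ← hconj]
  have hsubl (u u' v : V) : hm (u - u') v = hm u v - hm u' v := by
    rw [eq_sub_iff_add_eq, ← haddl, sub_add_cancel]
  have hsubr (u v v' : V) : hm u (v - v') = hm u v - hm u v' := by
    rw [eq_sub_iff_add_eq, ← haddr, sub_add_cancel]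
  have hskew (v' v'' u v : V) : hm (c v' v'' u) v + hm u (c v' v'' v) = 0 := by
    rw [hc, hc, hsubl, hsubr, hsmull, hsmull, hsmulr, hsmulr, ← hconj v v', ← hconj v v'']
    ring
  refine ⟨hskew, Set.Subset.antisymm (fun X hX => ?_) fun X hX => ?_⟩
  · induction hX using Submodule.span_induction with
    | mem X hX =>
      obtain ⟨p, rfl⟩ := hX
      exact hskew p.1 p.2
    | zero =>
      intro u v
      have hl := hsubl 0 0 v
      have hr := hsubr u 0 0
      simp only [sub_self] at hl hr
      simp [hl, hr]
    | add X Y _ _ hX hY =>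
      intro u v
      rw [LinearMap.add_apply, LinearMap.add_apply, haddl, haddr]
      linear_combination hX u v + hY u v
    | smul r X _ hX =>
      intro u v
      rw [LinearMap.smul_apply, LinearMap.smul_apply, ← algebraMap_smul E r (X u),
        ← algebraMap_smul E r (X v), hsmull, hsmulr, σ.commutes, ← mul_add, hX u v, mul_zero]
  · have : FiniteDimensional F E := Module.finite_of_finrank_pos (by omega)
    let b := Module.finBasis E V
    choose a ha using fun i =>
      exists_eq_hermitian_right σ hm haddl hsmull hconj hnd (b.coord i)
    have hexpand (u : V) : ∑ i, hm u (a i) • b i = u := by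
      simp [← ha]
    have hsuml (f : Fin (Module.finrank E V) → V) (v : V) :
        hm (∑ i, f i) v = ∑ i, hm (f i) v :=
      map_sum (AddMonoidHom.mk' (fun u => hm u v) fun u u' => haddl u u' v) f _
    have hdual (x : V) : ∑ i, hm x (b i) • a i = x := by
      refine sub_eq_zero.1 (hnd _ fun w => ?_)
      rw [hsubl, sub_eq_zero, hsuml, hconj w x]
      conv_rhs => rw [← hexpand w, hsuml, map_sum]
      refine Finset.sum_congr rfl fun i _ => ?_
      rw [hsmull, hsmull, map_mul, ← hconj, ← hconj, mul_comm]
    have htwo : (2 : F) • X = ∑ i, c (a i) (X (b i)) := by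
      ext u
      have hXu (i) : hm u (X (b i)) = -hm (X u) (b i) := by
        linear_combination hX u (b i)
      have hfirst : ∑ i, hm u (a i) • X (b i) = X u := by
        simpa using congrArg X (hexpand u)
      simp only [LinearMap.sum_apply, hc, hXu, neg_smul, sub_neg_eq_add,
        Finset.sum_add_distrib, hfirst, hdual, LinearMap.add_apply, two_smul]
    have hX' : X = (2 : F)⁻¹ • ∑ i, c (a i) (X (b i)) := by
      rw [← htwo, inv_smul_smul₀ two_ne_zero]
    rw [SetLike.mem_coe, hX']
    exact Submodule.smul_mem _ _ (Submodule.sum_mem _ fun i _ =>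
      Submodule.subset_span ⟨(a i, X (b i)), rfl⟩)
end

section
/- Let W ⊆ V be a subspace on which h is nondegenerate, W' = W^⊥ its orthogonal complement (so V = W ⊕ W'), and k = dim_E W' = dim_E V − dim_E W. Let 𝔤 = 𝔲(V,h) and 𝔥 = {X ∈ 𝔤 : X(W') = 0} (such X automatically preserve W, and 𝔥 is identified with 𝔲(W, h|_W)). Let x ∈ U(V,h) be semisimple (its minimal polynomial over E is squarefree) with x|_{W'} = id (hence x(W) = W). Write Ad(x)(X) = x X x^{-1}, 𝔤_x = ker(Ad(x) − id) on 𝔤, and 𝔥_x = 𝔥 ∩ 𝔤_x. Then det_F of the F-linear endomorphism induced by Ad(x) − id on 𝔤/𝔤_x equals det_F of the F-linear endomorphism induced by Ad(x) − id on 𝔥/𝔥_x, multiplied by N_{E/F}(det_E of the E-linear endomorphism induced by x − id on W/ker((x − id)|_W))^k. (Taking normalized absolute values over a p-adic field, this is the identity D^G(x) = D^H(x)·Δ(x)^k, with Δ(x) = |N_{E/F}(det(1 − x)|_{V/ker(x−1)})|_F.) -/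
/-- If `T` is surjective with kernel `ker f` and intertwines `f` with `f'`, then the endomorphism
induced by `f` on `M ⧸ ker f` has the same determinant as `f'`. -/
theorem det_quotient_ker_eq_of_intertwining {R M N : Type*} [CommRing R] [AddCommGroup M]
    [Module R M] [AddCommGroup N] [Module R N] (f : M →ₗ[R] M)
    (q : (M ⧸ LinearMap.ker f) →ₗ[R] (M ⧸ LinearMap.ker f))
    (hq : ∀ m : M, q (Submodule.Quotient.mk m) = Submodule.Quotient.mk (f m))
    (T : M →ₗ[R] N) (hT : Function.Surjective T) (hker : LinearMap.ker f = LinearMap.ker T)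
    (f' : N →ₗ[R] N) (hf' : ∀ m, T (f m) = f' (T m)) :
    LinearMap.det q = LinearMap.det f' := by
  let e : (M ⧸ LinearMap.ker f) ≃ₗ[R] N :=
    (Submodule.quotEquivOfEq _ _ hker).trans (T.quotKerEquivOfSurjective hT)
  have he : ∀ m : M, e (Submodule.Quotient.mk m) = T m := fun _ => rfl
  rw [← LinearMap.det_conj q e]
  congr 1
  ext n
  obtain ⟨m, rfl⟩ := hT n
  have hs : e.symm (T m) = Submodule.Quotient.mk m := by rw [← he, e.symm_apply_apply]
  simp only [LinearMap.comp_apply, LinearEquiv.coe_coe, hs, hq, he, hf']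

section Hermitian

variable {E V : Type*} [Field E] {σ : E →+* E} [AddCommGroup V] [Module E V]
  {B : V →ₗ[E] V →ₛₗ[σ] E}

/-- A vector orthogonal to every member of a basis of `W` is orthogonal to `W`. -/
theorem forall_apply_eq_zero_of_basis {ι : Type*} {W : Submodule E V}
    (c : Module.Basis ι E W) {v : V} (hv : ∀ i, B v (c i) = 0) : ∀ u ∈ W, B v u = 0 := by
  intro u hu
  have key : (⟨u, hu⟩ : W) ∈ Submodule.span E (Set.range c) := by simp [c.span_eq]
  suffices h : ∀ w : W, w ∈ Submodule.span E (Set.range c) → B v w = 0 from h _ key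
  intro w hw
  induction hw using Submodule.span_induction with
  | mem w hw => obtain ⟨i, rfl⟩ := hw; exact hv i
  | zero => simp
  | add a b _ _ ha hb => simp [ha, hb]
  | smul a b _ hb => simp [hb]

/-- A subspace on which a sesquilinear form is nondegenerate is complementary to its
orthogonal complement. -/
theorem isCompl_of_nondegenerate_on [FiniteDimensional E V] {W W' : Submodule E V}
    (hWnd : ∀ u ∈ W, (∀ v ∈ W, B u v = 0) → u = 0)
    (hW' : ∀ v : V, v ∈ W' ↔ ∀ u ∈ W, B v u = 0) : IsCompl W W' := by
  have hdisj : W ⊓ W' = ⊥ := by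
    rw [eq_bot_iff]
    rintro v ⟨hv, hv'⟩
    exact hWnd v hv ((hW' v).1 hv')
  refine IsCompl.of_eq hdisj ?_
  let c := Module.finBasis E W
  let f : V →ₗ[E] (Fin (Module.finrank E W) → E) := LinearMap.pi fun i => B.flip (c i)
  have hker : LinearMap.ker f ≤ W' := by
    intro v hv
    refine (hW' v).2 (forall_apply_eq_zero_of_basis c fun i => ?_)
    exact congrFun (LinearMap.mem_ker.1 hv) i
  have hrank := f.finrank_range_add_finrank_ker
  have hrange : Module.finrank E (LinearMap.range f) ≤ Module.finrank E W :=
    (Submodule.finrank_le _).trans (by simp)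
  have hker' := Submodule.finrank_mono hker
  have hsum := Submodule.finrank_sup_add_finrank_inf_eq W W'
  rw [hdisj, finrank_bot] at hsum
  apply Submodule.eq_top_of_finrank_eq
  have := Submodule.finrank_le (W ⊔ W')
  omega

/-- Existence of dual bases for a nondegenerate hermitian form on a subspace. -/
theorem exists_dual_basis_of_nondegenerate_on [FiniteDimensional E V] {ι : Type*} [Fintype ι]
    [DecidableEq ι] (hB : ∀ u v, B v u = σ (B u v)) {U : Submodule E V}
    (hU : ∀ u ∈ U, (∀ v ∈ U, B u v = 0) → u = 0) (b : Module.Basis ι E U) :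
    ∃ a : ι → V, (∀ j, a j ∈ U) ∧ ∀ i j, B (b i) (a j) = if i = j then 1 else 0 := by
  let f : U →ₗ[E] (ι → E) := LinearMap.pi fun i => B.flip (b i) ∘ₗ U.subtype
  have hinj : Function.Injective f := by
    rw [injective_iff_map_eq_zero]
    intro u hu
    exact Subtype.ext (hU u u.2 (forall_apply_eq_zero_of_basis b fun i => congrFun hu i))
  have hsurj : Function.Surjective f :=
    (LinearMap.injective_iff_surjective_of_finrank_eq_finrank
      (by simp [Module.finrank_eq_card_basis b])).1 hinj
  choose a ha using fun j => hsurj fun i => if i = j then 1 else 0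
  refine ⟨fun j => a j, fun j => (a j).2, fun i j => ?_⟩
  have : B (a j) (b i) = if i = j then 1 else 0 := congrFun (ha j) i
  rw [hB, this]
  split_ifs <;> simp

/-- The skew-hermitian endomorphism `v ↦ B v a • w - B v w • a`. -/
def skewRankTwo (B : V →ₗ[E] V →ₛₗ[σ] E) (a w : V) : Module.End E V :=
  (B.flip a).smulRight w - (B.flip w).smulRight a

theorem skewRankTwo_apply (a w v : V) : skewRankTwo B a w v = B v a • w - B v w • a := by
  simp [skewRankTwo]

theorem skewRankTwo_skew (hB : ∀ u v, B v u = σ (B u v)) (a w u v : V) :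
    B (skewRankTwo B a w u) v + B u (skewRankTwo B a w v) = 0 := by
  simp only [skewRankTwo_apply, map_sub, LinearMap.sub_apply, map_smul, LinearMap.smul_apply,
    map_smulₛₗ, smul_eq_mul, ← hB]
  ring

end Hermitian

/-- the identity `D^G(x) = D^H(x) Δ(x)^k` for a semisimple unitary element
`x` acting trivially on `W' = W^⊥`: the determinant of `Ad(x) − id` on `𝔤/𝔤_x` equals the
determinant of `Ad(x) − id` on `𝔥/𝔥_x` times `N_{E/F}(det((x − 1)|_{W/ker}))^k`. -/
theorem stmt_2 (F E : Type*) [Field F] [CharZero F] [Field E] [Algebra F E]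
    (hquad : Module.finrank F E = 2)
    (σ : E ≃ₐ[F] E) (hσnt : ∃ x : E, σ x ≠ x)
    (V : Type*) [AddCommGroup V] [Module E V] [Module F V] [IsScalarTower F E V]
    [FiniteDimensional E V]
    (hm : V → V → E)
    (haddl : ∀ u u' v : V, hm (u + u') v = hm u v + hm u' v)
    (hsmull : ∀ (a : E) (u v : V), hm (a • u) v = a * hm u v)
    (hconj : ∀ u v : V, hm v u = σ (hm u v))
    (hnd : ∀ u : V, (∀ v : V, hm u v = 0) → u = 0)
    (W : Submodule E V)
    (hWnd : ∀ u ∈ W, (∀ v ∈ W, hm u v = 0) → u = 0)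
    (W' : Submodule E V)
    (hW' : ∀ v : V, v ∈ W' ↔ ∀ u ∈ W, hm v u = 0)
    (x : V ≃ₗ[E] V)
    (hxh : ∀ u v : V, hm (x u) (x v) = hm u v)
    (hxss : Squarefree (minpoly E (x : V →ₗ[E] V)))
    (hxW' : ∀ v ∈ W', x v = v)
    (g h : Submodule F (Module.End E V))
    (hgmem : ∀ X : Module.End E V, X ∈ g ↔ ∀ u v : V, hm (X u) v + hm u (X v) = 0)
    (hhmem : ∀ X : Module.End E V, X ∈ h ↔
      (∀ u v : V, hm (X u) v + hm u (X v) = 0) ∧ ∀ v ∈ W', X v = 0)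
    (Φg : g →ₗ[F] g)
    (hΦg : ∀ X : g, (↑(Φg X) : Module.End E V) =
      ((x : V →ₗ[E] V) ∘ₗ (↑X : Module.End E V) ∘ₗ (x.symm : V →ₗ[E] V)) -
        (↑X : Module.End E V))
    (Φh : h →ₗ[F] h)
    (hΦh : ∀ X : h, (↑(Φh X) : Module.End E V) =
      ((x : V →ₗ[E] V) ∘ₗ (↑X : Module.End E V) ∘ₗ (x.symm : V →ₗ[E] V)) -
        (↑X : Module.End E V))
    (ψ : W →ₗ[E] W)
    (hψ : ∀ u : W, (↑(ψ u) : V) = x ↑u - ↑u)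
    (qg : (g ⧸ LinearMap.ker Φg) →ₗ[F] (g ⧸ LinearMap.ker Φg))
    (hqg : ∀ X : g, qg (Submodule.Quotient.mk X) = Submodule.Quotient.mk (Φg X))
    (qh : (h ⧸ LinearMap.ker Φh) →ₗ[F] (h ⧸ LinearMap.ker Φh))
    (hqh : ∀ X : h, qh (Submodule.Quotient.mk X) = Submodule.Quotient.mk (Φh X))
    (qψ : (W ⧸ LinearMap.ker ψ) →ₗ[E] (W ⧸ LinearMap.ker ψ))
    (hqψ : ∀ u : W, qψ (Submodule.Quotient.mk u) = Submodule.Quotient.mk (ψ u)) :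
    LinearMap.det qg =
      LinearMap.det qh * Algebra.norm F (LinearMap.det qψ) ^ Module.finrank E W' := by
  have : FiniteDimensional F E := Module.finite_of_finrank_pos (by omega)
  have : FiniteDimensional F V := Module.Finite.trans E V
  have : FiniteDimensional F (Module.End E V) :=
    Module.Finite.of_injective (LinearMap.restrictScalarsₗ F E V V F)
      (LinearMap.restrictScalars_injective F)
  have haddr : ∀ u v v' : V, hm u (v + v') = hm u v + hm u v' := fun u v v' => by
    rw [hconj, haddl, map_add, ← hconj, ← hconj]
  have hsmulr : ∀ (a : E) (u v : V), hm u (a • v) = σ a * hm u v := fun a u v => by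
    rw [hconj, hsmull, map_mul, ← hconj]
  obtain ⟨B, rfl⟩ : ∃ B : V →ₗ[E] V →ₛₗ[(σ : E →+* E)] E, (fun u v => B u v) = hm :=
    ⟨LinearMap.mk₂'ₛₗ (RingHom.id E) (σ : E →+* E) hm haddl hsmull haddr hsmulr, rfl⟩
  beta_reduce at *
  have hB : ∀ u v : V, B v u = (σ : E →+* E) (B u v) := hconj
  have hB0 : ∀ u v : V, B u v = 0 → B v u = 0 := fun u v huv => by rw [hB, huv, map_zero]
  have hc : IsCompl W W' := isCompl_of_nondegenerate_on hWnd hW'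
  let p : V →ₗ[E] W := W.projectionOnto W' hc
  have hp_left : ∀ w : W, p w = w := fun w => Submodule.projectionOnto_apply_left hc w
  have hp_ker : ∀ v : V, p v = 0 ↔ v ∈ W' := fun v => by
    rw [← LinearMap.mem_ker, Submodule.ker_projectionOnto]
  have hp_sub : ∀ v : V, v - p v ∈ W' := fun v => by
    rw [← hp_ker, map_sub, hp_left, sub_self]
  have hp_adj₁ : ∀ u v : V, B (p u) v = B (p u) (p v) := fun u v => by
    rw [← sub_eq_zero, ← map_sub]
    exact hB0 _ _ ((hW' _).1 (hp_sub v) _ (p u).2)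
  have hp_adj₂ : ∀ u v : V, B u (p v) = B (p u) (p v) := fun u v => by
    rw [← sub_eq_zero, ← LinearMap.sub_apply, ← map_sub]
    exact (hW' _).1 (hp_sub u) _ (p v).2
  have hW'_perp : ∀ v : V, (∀ u ∈ W', B v u = 0) → (p v : V) = v := by
    intro v hv
    refine (sub_eq_zero.1 (hnd _ fun u => ?_)).symm
    have h₁ : B (v - p v) (p u) = 0 := (hW' _).1 (hp_sub v) _ (p u).2
    have h₂ : B (p v) (u - p u) = 0 := hB0 _ _ ((hW' _).1 (hp_sub u) _ (p v).2)
    have h₃ : B v (u - p u) = 0 := hv _ (hp_sub u)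
    have : B (v - p v) (u - p u) = 0 := by
      rw [map_sub B, LinearMap.sub_apply, h₂, h₃, sub_zero]
    rw [map_sub, h₁, sub_zero] at this
    exact this
  have hW'nd : ∀ u ∈ W', (∀ v ∈ W', B u v = 0) → u = 0 := fun u hu huv => by
    rw [← hW'_perp u huv, (hp_ker u).2 hu, Submodule.coe_zero]
  have hxW : ∀ w : W, x w = (ψ w + w : W) := fun w => by simp [hψ]
  have hpx : ∀ v : V, p (x v) = ψ (p v) + p v := fun v => by
    have : x v = (ψ (p v) + p v : W) + (v - p v) := by
      rw [← hxW, ← hxW' _ (hp_sub v), ← map_add, add_sub_cancel]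
    rw [this, map_add, hp_left, (hp_ker _).2 (hp_sub v), add_zero]
  have hpx' : ∀ v : V, (p (x v) : V) = x (p v) := fun v => by rw [hpx, hxW]
  have hpxs : ∀ v : V, (p (x.symm v) : V) = x.symm (p v) := fun v => by
    rw [LinearEquiv.eq_symm_apply, ← hpx', x.apply_symm_apply]
  have hxs : ∀ v ∈ W', x.symm v = v := fun v hv => by
    rw [LinearEquiv.symm_apply_eq, hxW' v hv]
  have hcomp : ∀ X ∈ g, (W.subtype ∘ₗ p) ∘ₗ X ∘ₗ (W.subtype ∘ₗ p) ∈ h := by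
    intro X hX
    rw [hgmem] at hX
    refine (hhmem _).2 ⟨fun u v => ?_, fun v hv => ?_⟩
    · simp only [LinearMap.comp_apply, Submodule.subtype_apply]
      rw [hp_adj₁, ← hp_adj₂, hp_adj₂ u, ← hp_adj₁]
      exact hX _ _
    · simp [(hp_ker v).2 hv]
  let b := Module.finBasis E W'
  let S₁ : g →ₗ[F] h :=
    { toFun := fun X => ⟨_, hcomp X X.2⟩
      map_add' := fun X Y => by ext v; simp
      map_smul' := fun r X => by
        ext v
        simp [LinearMap.map_smul_of_tower] }
  let S₂ : g →ₗ[F] (Fin (Module.finrank E W') → W) :=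
    { toFun := fun X i => p ((X : Module.End E V) (b i))
      map_add' := fun X Y => by ext i; simp
      map_smul' := fun r X => by
        ext i
        simp [LinearMap.map_smul_of_tower] }
  have hS₁ : ∀ (X : g) (v : V), (S₁ X : Module.End E V) v = p ((X : Module.End E V) (p v)) :=
    fun _ _ => rfl
  have hS₂ : ∀ (X : g) i, S₂ X i = p ((X : Module.End E V) (b i)) := fun _ _ => rfl
  have hS₁Φ : ∀ X, S₁ (Φg X) = Φh (S₁ X) := fun X => by
    ext v
    simp only [hS₁, hΦg, hΦh, LinearMap.sub_apply, LinearMap.comp_apply, LinearEquiv.coe_coe,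
      map_sub, Submodule.coe_sub, hpx', hpxs]
  have hS₂Φ : ∀ X i, S₂ (Φg X) i = ψ (S₂ X i) := fun X i => by
    simp only [hS₂, hΦg, LinearMap.sub_apply, LinearMap.comp_apply, LinearEquiv.coe_coe,
      map_sub, hpx, hxs _ (b i).2, add_sub_cancel_right]
  have hS_inj : ∀ X, S₁ (Φg X) = 0 → S₂ (Φg X) = 0 → Φg X = 0 := by
    intro X h₁ h₂
    have hskew := (hgmem _).1 (Φg X).2
    have hY₀ : ∀ u ∈ W', p ((Φg X : Module.End E V) u) = 0 := by
      have : p ∘ₗ (Φg X : Module.End E V) ∘ₗ W'.subtype = 0 :=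
        b.ext fun i => congrFun h₂ i
      exact fun u hu => LinearMap.congr_fun this ⟨u, hu⟩
    have hY : ∀ u ∈ W', (Φg X : Module.End E V) u = 0 := by
      intro u hu
      refine hW'nd _ ((hp_ker _).1 (hY₀ u hu)) fun v hv => ?_
      have := hxh ((X : Module.End E V) u) v
      rw [hxW' v hv] at this
      simp [hΦg, hxs u hu, this]
    ext v
    have hv : (Φg X : Module.End E V) v = (Φg X : Module.End E V) (p v) := by
      rw [← sub_eq_zero, ← map_sub, hY _ (hp_sub v)]
    have hpv : (p ((Φg X : Module.End E V) (p v)) : V) = 0 := by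
      rw [← hS₁, h₁]; rfl
    rw [hv, ← hW'_perp ((Φg X : Module.End E V) (p v)) fun u hu => ?_, hpv]
    · rfl
    · simpa [hY u hu] using hskew (p v) u
  have hS_surj : ∀ (Z : h) (w : Fin (Module.finrank E W') → W),
      ∃ X, S₁ X = Z ∧ S₂ X = w := by
    intro Z w
    obtain ⟨a, ha, hab⟩ := exists_dual_basis_of_nondegenerate_on hB hW'nd b
    have hZ := (hhmem _).1 Z.2
    have hZp : ∀ v, (p ((Z : Module.End E V) v) : V) = (Z : Module.End E V) v := fun v =>
      hW'_perp _ fun u hu => by simpa [hZ.2 u hu] using hZ.1 v u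
    have hZv : ∀ v, (Z : Module.End E V) (p v) = (Z : Module.End E V) v := fun v => by
      rw [eq_comm, ← sub_eq_zero, ← map_sub, hZ.2 _ (hp_sub v)]
    have hR : ∑ j, skewRankTwo B (a j) (w j) ∈ g :=
      sum_mem fun j _ => (hgmem _).2 (skewRankTwo_skew hB _ _)
    refine ⟨⟨Z, (hgmem _).2 hZ.1⟩ + ⟨_, hR⟩, ?_, ?_⟩
    · ext v
      rw [hS₁]
      have : ∀ j, B (p v) (a j) = 0 := fun j => hB0 _ _ ((hW' _).1 (ha j) _ (p v).2)
      simp [skewRankTwo_apply, this, (hp_ker _).2 (ha _), hZp, hZv]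
    · ext i
      have : ∀ j, B (b i) (w j) = 0 := fun j => (hW' _).1 (b i).2 _ (w j).2
      rw [hS₂]
      simp [skewRankTwo_apply, this, hab, hZ.2 _ (b i).2, hp_left]
  let T : g →ₗ[F] (h ⧸ LinearMap.ker Φh) ×
      (Fin (Module.finrank E W') → W ⧸ LinearMap.ker ψ) :=
    ((LinearMap.ker Φh).mkQ ∘ₗ S₁).prod
      (LinearMap.pi fun i => (LinearMap.ker ψ).mkQ.restrictScalars F ∘ₗ LinearMap.proj i ∘ₗ S₂)
  let f' : Module.End F (Fin (Module.finrank E W') → W ⧸ LinearMap.ker ψ) :=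
    LinearMap.pi fun i => qψ.restrictScalars F ∘ₗ LinearMap.proj i
  have : FiniteDimensional F (W ⧸ LinearMap.ker ψ) := Module.Finite.trans E _
  have hdet := det_quotient_ker_eq_of_intertwining Φg qg hqg T ?_ ?_ (LinearMap.prodMap qh f') ?_
  · rw [hdet, LinearMap.det_prodMap, LinearMap.det_pi, Finset.prod_const, Finset.card_univ,
      Fintype.card_fin, LinearMap.det_restrictScalars]
  · rintro ⟨Z, w⟩
    obtain ⟨Z, rfl⟩ := Submodule.Quotient.mk_surjective _ Z
    choose w' hw' using fun i => Submodule.Quotient.mk_surjective _ (w i)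
    obtain ⟨X, h₁, h₂⟩ := hS_surj Z w'
    refine ⟨X, Prod.ext ?_ (funext fun i => ?_)⟩
    · simp [T, h₁]
    · simp [T, h₂, hw']
  · ext X
    have hT : T X = 0 ↔ S₁ (Φg X) = 0 ∧ S₂ (Φg X) = 0 := by
      simp [T, Prod.ext_iff, funext_iff, hS₁Φ, hS₂Φ, Submodule.Quotient.mk_eq_zero]
    rw [LinearMap.mem_ker, LinearMap.mem_ker, hT]
    exact ⟨fun h₀ => by simp [h₀], fun h₀ => hS_inj X h₀.1 h₀.2⟩
  · intro X
    refine Prod.ext ?_ (funext fun i => ?_)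
    · simp [T, hS₁Φ, hqh]
    · simp [T, f', hS₂Φ, hqψ]
end

section
/- Let r ≥ 0 and d ≥ 0 be integers and let R ∈ E[T] be a monic polynomial of degree d with R(0) ≠ 0. Then the 2r + d + 2 polynomials T^{2r}·D^i(R) for i = 1,…,d, together with T^j·R for j = 0,…,2r+1, form a basis of the E-vector space of polynomials of degree at most 2r + d + 1. -/
open Polynomial

theorem Polynomial.linearIndependent_of_injective_degree {ι E : Type*} [Field E] {f : ι → E[X]}
    (hf : ∀ i, f i ≠ 0) (hinj : Function.Injective fun i => (f i).degree) :
    LinearIndependent E f := by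
  rw [linearIndependent_iff']
  intro s g hg i hi
  by_contra hgi
  have hdeg := degree_sum_eq_of_disjoint (fun i => g i • f i) s (by
    intro a ha b hb hab
    have ha' : g a ≠ 0 := fun h => ha.2 (by simp [h])
    have hb' : g b ≠ 0 := fun h => hb.2 (by simp [h])
    simp only [Function.onFun, Function.comp_apply, degree_smul_of_smul_regular _
      (IsSMulRegular.of_ne_zero ha'), degree_smul_of_smul_regular _ (IsSMulRegular.of_ne_zero hb')]
    exact hinj.ne hab)
  rw [hg, degree_zero] at hdeg
  have hle := Finset.le_sup (f := fun i => (g i • f i).degree) hi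
  rw [← hdeg, le_bot_iff, degree_eq_bot, smul_eq_zero] at hle
  exact hle.elim hgi (hf i)

theorem Polynomial.natDegree_iterate_divX {E : Type*} [Semiring E] (p : E[X]) (n : ℕ) :
    (divX^[n] p).natDegree = p.natDegree - n := by
  induction n with
  | zero => simp
  | succ n ih => rw [Function.iterate_succ_apply', natDegree_divX_eq_natDegree_tsub_one, ih]; omega

theorem Polynomial.coeff_iterate_divX {E : Type*} [Semiring E] (p : E[X]) (n k : ℕ) :
    (divX^[n] p).coeff k = p.coeff (k + n) := by
  induction n generalizing k with
  | zero => simp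
  | succ n ih => rw [Function.iterate_succ_apply', coeff_divX, ih]; congr 1; omega

theorem Polynomial.degree_iterate_divX_of_le {E : Type*} [Semiring E] {p : E[X]} {n : ℕ}
    (hp : p ≠ 0) (hn : n ≤ p.natDegree) :
    (divX^[n] p).degree = (p.natDegree - n : ℕ) := by
  have hne : divX^[n] p ≠ 0 := fun h => hp <| by
    have := coeff_iterate_divX p n (p.natDegree - n)
    rwa [h, coeff_zero, Nat.sub_add_cancel hn, coeff_natDegree, eq_comm,
      leadingCoeff_eq_zero] at this
  rw [degree_eq_natDegree hne, natDegree_iterate_divX]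

/-- for a monic polynomial `R` of degree `d` with `R(0) ≠ 0`, the `2r+d+2`
polynomials `T^{2r}·D^i(R)` (for `i = 1,…,d`) and `T^j·R` (for `j = 0,…,2r+1`) form a basis
of the space of polynomials of degree at most `2r+d+1`. Here `D` is the coefficient-shift
operator, which is `Polynomial.divX`. -/
theorem stmt_5 (E : Type*) [Field E] (r d : ℕ) (R : Polynomial E)
    (hmonic : R.Monic) (hdeg : R.natDegree = d) (h0 : Polynomial.eval 0 R ≠ 0) :
    LinearIndependent E
      (Sum.elim
        (fun i : Fin d => Polynomial.X ^ (2 * r) * (Polynomial.divX)^[(i : ℕ) + 1] R)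
        (fun j : Fin (2 * r + 2) => Polynomial.X ^ (j : ℕ) * R)) ∧
    Submodule.span E
      (Set.range
        (Sum.elim
          (fun i : Fin d => Polynomial.X ^ (2 * r) * (Polynomial.divX)^[(i : ℕ) + 1] R)
          (fun j : Fin (2 * r + 2) => Polynomial.X ^ (j : ℕ) * R))) =
      Polynomial.degreeLT E (2 * r + d + 2) := by
  have hR : R ≠ 0 := hmonic.ne_zero
  have hdegR : R.degree = (d : ℕ) := by rw [degree_eq_natDegree hR, hdeg]
  have hdegD (i : Fin d) : (divX^[(i : ℕ) + 1] R).degree = (d - (i + 1) : ℕ) := by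
    rw [degree_iterate_divX_of_le hR (by omega), hdeg]
  have hdeg₁ (i : Fin d) :
      (X ^ (2 * r) * divX^[(i : ℕ) + 1] R).degree = ((2 * r + (d - (i + 1)) : ℕ) : WithBot ℕ) := by
    rw [degree_mul, degree_X_pow, hdegD, ← Nat.cast_add]
  have hdeg₂ (j : Fin (2 * r + 2)) : (X ^ (j : ℕ) * R).degree = ((j + d : ℕ) : WithBot ℕ) := by
    rw [degree_mul, degree_X_pow, hdegR, ← Nat.cast_add]
  have hcop : IsCoprime R (X ^ (2 * r)) := by
    refine (IsCoprime.pow_left ?_).symm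
    refine (irreducible_X.coprime_iff_not_dvd).2 ?_
    rwa [X_dvd_iff, coeff_zero_eq_eval_zero]
  have hli : LinearIndependent E
      (Sum.elim
        (fun i : Fin d => X ^ (2 * r) * divX^[(i : ℕ) + 1] R)
        (fun j : Fin (2 * r + 2) => X ^ (j : ℕ) * R)) := by
    refine LinearIndependent.sum_type ?_ ?_ ?_
    · refine linearIndependent_of_injective_degree (fun i h => ?_) (fun i j h => ?_)
      · exact WithBot.natCast_ne_bot _ ((hdeg₁ i).symm.trans (degree_eq_bot.2 h))
      · simp only [hdeg₁, Nat.cast_inj] at h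
        omega
    · refine linearIndependent_of_injective_degree (fun i h => ?_) (fun i j h => ?_)
      · exact WithBot.natCast_ne_bot _ ((hdeg₂ i).symm.trans (degree_eq_bot.2 h))
      · simp only [hdeg₂, Nat.cast_inj] at h
        omega
    · have h₁ : Submodule.span E (Set.range fun i : Fin d =>
          X ^ (2 * r) * divX^[(i : ℕ) + 1] R) ≤
          (degreeLT E d).map (LinearMap.mulLeft E (X ^ (2 * r))) := by
        rw [Submodule.span_le]
        rintro _ ⟨i, rfl⟩
        refine ⟨_, mem_degreeLT.2 ?_, rfl⟩
        rw [hdegD, Nat.cast_lt]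
        omega
      have h₂ : Submodule.span E (Set.range fun j : Fin (2 * r + 2) => X ^ (j : ℕ) * R) ≤
          (Ideal.span {R}).restrictScalars E := by
        rw [Submodule.span_le]
        rintro _ ⟨j, rfl⟩
        exact Ideal.mem_span_singleton.2 (dvd_mul_left _ _)
      refine Disjoint.mono h₁ h₂ (Submodule.disjoint_def.2 ?_)
      rintro _ ⟨a, ha, rfl⟩ hdvd
      have hRa : R ∣ a := hcop.dvd_of_dvd_mul_left (Ideal.mem_span_singleton.1 hdvd)
      rw [eq_zero_of_dvd_of_degree_lt hRa (by rw [hdegR]; exact mem_degreeLT.1 ha), map_zero]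
  refine ⟨hli, ?_⟩
  have : Module.Finite E (degreeLT E (2 * r + d + 2)) :=
    Module.Finite.equiv (degreeLTEquiv E (2 * r + d + 2)).symm
  refine Submodule.eq_of_le_of_finrank_eq ?_ ?_
  · rw [Submodule.span_le]
    rintro _ ⟨i | j, rfl⟩ <;> refine mem_degreeLT.2 ?_
    · rw [Sum.elim_inl, hdeg₁, Nat.cast_lt]
      omega
    · rw [Sum.elim_inr, hdeg₂, Nat.cast_lt]
      omega
  · rw [finrank_span_eq_card hli, (degreeLTEquiv E (2 * r + d + 2)).finrank_eq]
    simp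
    omega
end

section
/- There exists a compact subset C₁ of G₀ with the following property: for all nonzero v, v' ∈ V₀ with h(v,v) = h(v',v') = ν₀ and val_{R₀}(v) = val_{R₀}(v'), there exists γ ∈ C₁ with γ(v) = v'. -/
/-! Common setup for the p-adic statements.  `E` is a nonarchimedean local field of
characteristic zero (a complete, nontrivially normed field with ultrametric norm,
compact unit ball, and discrete valuation `valE` normalized at a uniformizer `πE`),
`σ` is an involution of `E`, and `(V₀, h)` is a hermitian space over `E` relative
to `σ`.  The unitary group `G₀` is realized inside the continuous linear
endomorphisms of `V₀`. -/

section PadSetup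

variable (E : Type*) [NontriviallyNormedField E]
variable (V₀ : Type*) [NormedAddCommGroup V₀] [NormedSpace E V₀]

/-- The unitary group `G₀ = U(V₀, h)`. -/
def PadG (h : V₀ → V₀ → E) : Set (V₀ →L[E] V₀) :=
  {g | Function.Bijective (⇑g) ∧ ∀ u v : V₀, h (g u) (g v) = h u v}

/-- The subgroup `H` of `G₀` fixing `w₀` (the unitary group of `W = (Ew₀)^⊥`). -/
def PadH (h : V₀ → V₀ → E) (w₀ : V₀) : Set (V₀ →L[E] V₀) :=
  {g | g ∈ PadG E V₀ h ∧ g w₀ = w₀}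

/-- The anisotropic kernel `V_{an,0}`: the orthogonal complement of the hyperbolic
space `⊕ᵢ (Euᵢ ⊕ Eu₋ᵢ)`, where `u±ᵢ = w_{2i−2} ± w_{2i−1}` for `1 ≤ i ≤ r₀ = ⌊(l+1)/2⌋`. -/
def PadVan (h : V₀ → V₀ → E) (l : ℕ) (w : ℕ → V₀) : Set V₀ :=
  {v | ∀ i : ℕ, 1 ≤ i → i ≤ (l + 1) / 2 →
    h v (w (2 * i - 2) + w (2 * i - 1)) = 0 ∧ h v (w (2 * i - 2) - w (2 * i - 1)) = 0}

/-- `R_{an,0} = {v ∈ V_{an,0} : val_E h(v,v) ≥ val_E ν₀ − 1}`. -/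
def PadRan (h : V₀ → V₀ → E) (l : ℕ) (w : ℕ → V₀) (valE : E → ℤ) (ν₀ : E) : Set V₀ :=
  {v | v ∈ PadVan E V₀ h l w ∧ (v = 0 ∨ valE ν₀ - 1 ≤ valE (h v v))}

/-- The lattice `R₀ = O_E u₁ + O_E u₋₁ + … + O_E u_{r₀} + O_E u₋_{r₀} + R_{an,0}`. -/
def PadR0 (h : V₀ → V₀ → E) (l : ℕ) (w : ℕ → V₀) (valE : E → ℤ) (ν₀ : E) : Set V₀ :=
  {v | ∃ (a b : ℕ → E) (x : V₀), x ∈ PadRan E V₀ h l w valE ν₀ ∧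
    (∀ i, ‖a i‖ ≤ 1) ∧ (∀ i, ‖b i‖ ≤ 1) ∧
    v = (∑ i ∈ Finset.Icc 1 ((l + 1) / 2), a i • (w (2 * i - 2) + w (2 * i - 1))) +
      (∑ i ∈ Finset.Icc 1 ((l + 1) / 2), b i • (w (2 * i - 2) - w (2 * i - 1))) + x}

end PadSetup

/-- `h` is hermitian with respect to the involution `σ`: linear in the first variable and
conjugate-symmetric. -/
structure IsHermitianForm {E V : Type*} [Field E] [AddCommGroup V] [Module E V]
    (σ : E ≃+* E) (h : V → V → E) : Prop where
  involutive : ∀ x, σ (σ x) = x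
  add_left : ∀ u u' v, h (u + u') v = h u v + h u' v
  smul_left : ∀ (a : E) u v, h (a • u) v = a * h u v
  conj : ∀ u v, h v u = σ (h u v)

namespace IsHermitianForm

section Algebra

variable {E V : Type*} [Field E] [AddCommGroup V] [Module E V] {σ : E ≃+* E} {h : V → V → E}

lemma add_right (H : IsHermitianForm σ h) (u v v' : V) : h u (v + v') = h u v + h u v' := by
  rw [H.conj, H.add_left, map_add, ← H.conj, ← H.conj]

lemma smul_right (H : IsHermitianForm σ h) (a : E) (u v : V) : h u (a • v) = σ a * h u v := by
  rw [H.conj, H.smul_left, map_mul, ← H.conj]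

lemma neg_left (H : IsHermitianForm σ h) (u v : V) : h (-u) v = -h u v := by
  rw [← neg_one_smul E u, H.smul_left, neg_one_mul]

lemma sub_left (H : IsHermitianForm σ h) (u u' v : V) : h (u - u') v = h u v - h u' v := by
  rw [sub_eq_add_neg, H.add_left, H.neg_left, sub_eq_add_neg]

lemma sub_right (H : IsHermitianForm σ h) (u v v' : V) : h u (v - v') = h u v - h u v' := by
  rw [H.conj, H.sub_left, map_sub, ← H.conj, ← H.conj]

lemma zero_left (H : IsHermitianForm σ h) (v : V) : h 0 v = 0 := by
  rw [← zero_smul E (0 : V), H.smul_left, zero_mul]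

lemma zero_right (H : IsHermitianForm σ h) (v : V) : h v 0 = 0 := by
  rw [H.conj, H.zero_left, map_zero]

lemma sum_left (H : IsHermitianForm σ h) {ι : Type*} (s : Finset ι) (f : ι → V) (v : V) :
    h (∑ i ∈ s, f i) v = ∑ i ∈ s, h (f i) v := by
  induction s using Finset.cons_induction with
  | empty => simp [H.zero_left]
  | cons a s ha ih => simp [H.add_left, ih]

lemma sum_right (H : IsHermitianForm σ h) {ι : Type*} (s : Finset ι) (f : ι → V) (v : V) :
    h v (∑ i ∈ s, f i) = ∑ i ∈ s, h v (f i) := by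
  induction s using Finset.cons_induction with
  | empty => simp [H.zero_right]
  | cons a s ha ih => simp [H.add_right, ih]

lemma conj_self (H : IsHermitianForm σ h) (v : V) : σ (h v v) = h v v := (H.conj v v).symm

lemma eq_zero_symm (H : IsHermitianForm σ h) {u v : V} : h u v = 0 ↔ h v u = 0 := by
  rw [H.conj u v]; simp

/-- The quasi-reflection sending `v` to `v'` preserves the form when `h v v = h v' v'`. -/
lemma quasiReflection_isometry (H : IsHermitianForm σ h) {v v' : V} (hvv : h v v = h v' v')
    (hne : h v (v - v') ≠ 0) (x y : V) :
    h (x - (h x (v - v') / h v (v - v')) • (v - v'))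
      (y - (h y (v - v') / h v (v - v')) • (v - v')) = h x y := by
  have key : h (v - v') (v - v') = h (v - v') v + h v (v - v') := by
    simp only [H.sub_left, H.sub_right, hvv]; ring
  have hne' : h (v - v') v ≠ 0 := fun h0 => hne (H.eq_zero_symm.1 h0)
  generalize v - v' = s at *
  rw [H.sub_left, H.sub_right, H.sub_right, H.smul_left, H.smul_left, H.smul_right,
    H.smul_right, map_div₀, ← H.conj, ← H.conj, key]
  field_simp
  ring

/-- A vector not orthogonal to an isotropic vector `e` becomes isotropic after adding a
multiple of `e`. -/
lemma exists_isotropic_add_smul [CharZero E] (H : IsHermitianForm σ h) {e u : V}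
    (he : h e e = 0) (hue : h u e ≠ 0) : ∃ c : E, h (u + c • e) (u + c • e) = 0 := by
  have heu : h e u ≠ 0 := fun h0 => hue (H.eq_zero_symm.1 h0)
  refine ⟨-h u u / (2 * h e u), ?_⟩
  have h2 : σ (2 : E) = 2 := map_ofNat σ 2
  simp only [H.add_left, H.add_right, H.smul_left, H.smul_right, he, map_div₀, map_neg,
    map_mul, h2, ← H.conj]
  field_simp
  ring

/-- An isotropic vector belongs to a hyperbolic pair. -/
lemma exists_hyperbolic_pair [CharZero E] (H : IsHermitianForm σ h)
    (hnd : ∀ u, (∀ v, h u v = 0) → u = 0) {e : V} (he0 : e ≠ 0) (he : h e e = 0) (m : E) :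
    ∃ f, h f f = 0 ∧ h e f = m := by
  obtain ⟨g, hg⟩ : ∃ g, h e g ≠ 0 := by
    by_contra! hc
    exact he0 (hnd e hc)
  obtain ⟨c, hc⟩ := H.exists_isotropic_add_smul he (u := g) (fun h0 => hg (H.eq_zero_symm.1 h0))
  refine ⟨σ (m / h e g) • (g + c • e), ?_, ?_⟩
  · rw [H.smul_left, H.smul_right, hc, mul_zero, mul_zero]
  · simp [H.smul_right, H.add_right, H.involutive, he, hg]

/-- In an isotropic space the isotropic vectors separate points. -/
lemma exists_isotropic_not_orthogonal [CharZero E] (H : IsHermitianForm σ h)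
    (hnd : ∀ u, (∀ v, h u v = 0) → u = 0) {e₀ : V} (he0 : e₀ ≠ 0) (he : h e₀ e₀ = 0)
    {x : V} (hx : x ≠ 0) : ∃ e, h e e = 0 ∧ h x e ≠ 0 := by
  by_contra! hc
  have step : ∀ u, h u e₀ ≠ 0 → h x u = 0 := by
    intro u hu
    obtain ⟨c, hcu⟩ := H.exists_isotropic_add_smul he hu
    have := hc _ hcu
    rwa [H.add_right, H.smul_right, hc _ he, mul_zero, add_zero] at this
  obtain ⟨f, hf, hef⟩ := H.exists_hyperbolic_pair hnd he0 he 1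
  refine hx (hnd x fun u => ?_)
  by_cases hu : h u e₀ = 0
  · have hfe : h f e₀ = 1 := by rw [H.conj, hef, map_one]
    have := step (u + f) (by rw [H.add_left, hu, hfe, zero_add]; exact one_ne_zero)
    rwa [H.add_right, hc f hf, add_zero] at this
  · exact step u hu

/-- A nontrivial involution has a nonzero anti-fixed element. -/
lemma exists_skew (H : IsHermitianForm σ h) (hnt : ∃ x, σ x ≠ x) :
    ∃ s : E, s ≠ 0 ∧ σ s = -s := by
  obtain ⟨x, hx⟩ := hnt
  exact ⟨x - σ x, sub_ne_zero.2 (Ne.symm hx), by rw [map_sub, H.involutive]; ring⟩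

lemma exists_isotropic_not_orthogonal_pair [CharZero E] (H : IsHermitianForm σ h)
    (hnt : ∃ x, σ x ≠ x) (hnd : ∀ u, (∀ v, h u v = 0) → u = 0) {e₀ : V} (he0 : e₀ ≠ 0)
    (he : h e₀ e₀ = 0) {x y : V} (hx : x ≠ 0) (hy : y ≠ 0) :
    ∃ e, h e e = 0 ∧ h x e ≠ 0 ∧ h y e ≠ 0 := by
  obtain ⟨e₁, h1, hx1⟩ := H.exists_isotropic_not_orthogonal hnd he0 he hx
  obtain ⟨e₂, h2, hy2⟩ := H.exists_isotropic_not_orthogonal hnd he0 he hy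
  by_cases hy1 : h y e₁ = 0
  swap
  · exact ⟨e₁, h1, hx1, hy1⟩
  by_cases hx2 : h x e₂ = 0
  swap
  · exact ⟨e₂, h2, hx2, hy2⟩
  obtain ⟨t, ht0, ht⟩ : ∃ t : E, t ≠ 0 ∧ σ t * h e₁ e₂ + t * h e₂ e₁ = 0 := by
    by_cases h12 : h e₁ e₂ = 0
    · exact ⟨1, one_ne_zero, by rw [h12, H.eq_zero_symm.1 h12]; ring⟩
    · obtain ⟨s, hs0, hs⟩ := H.exists_skew hnt
      refine ⟨s * h e₁ e₂, mul_ne_zero hs0 h12, ?_⟩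
      rw [map_mul, hs, ← H.conj]; ring
  refine ⟨e₁ + t • e₂, ?_, ?_, ?_⟩
  · simp only [H.add_left, H.add_right, H.smul_left, H.smul_right, h1, h2]
    linear_combination ht
  · simpa [H.add_right, H.smul_right, hx2] using hx1
  · simpa [H.add_right, H.smul_right, hy1, ht0] using hy2

/-- A nontrivial involution has a norm-one element different from `1` and `-1`. -/
lemma exists_norm_one [CharZero E] (H : IsHermitianForm σ h) (hnt : ∃ x, σ x ≠ x) :
    ∃ ε : E, σ ε * ε = 1 ∧ ε ≠ 1 ∧ 1 + ε ≠ 0 := by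
  obtain ⟨s, hs0, hs⟩ := H.exists_skew hnt
  have hs1 : 1 - s ≠ 0 := by
    intro h0
    have h1 : s = 1 := (sub_eq_zero.1 h0).symm
    rw [h1, map_one] at hs
    exact absurd hs (by norm_num)
  have hs2 : 1 + s ≠ 0 := by
    intro h0
    have h1 : s = -1 := by linear_combination h0
    rw [h1, map_neg, map_one] at hs
    exact absurd hs (by norm_num)
  refine ⟨(1 + s) / (1 - s), ?_, ?_, ?_⟩
  · rw [map_div₀, map_add, map_sub, map_one, hs, ← sub_eq_add_neg, sub_neg_eq_add]
    field_simp
  · rw [Ne, div_eq_one_iff_eq hs1]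
    intro h0
    exact hs0 (by linear_combination (1 / 2 : E) * h0)
  · have h1 : 1 + (1 + s) / (1 - s) = 2 / (1 - s) := by field_simp; ring
    rw [h1]
    exact div_ne_zero two_ne_zero hs1

end Algebra

end IsHermitianForm

/-- Some `h`-isometry of operator norm at most `M` sends `v` to `v'`. -/
def BoundedConj {E V : Type*} [NontriviallyNormedField E] [NormedAddCommGroup V]
    [NormedSpace E V] (h : V → V → E) (M : ℝ) (v v' : V) : Prop :=
  ∃ γ : V →L[E] V, (∀ x y, h (γ x) (γ y) = h x y) ∧ ‖γ‖ ≤ M ∧ γ v = v'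

namespace BoundedConj

variable {E V : Type*} [NontriviallyNormedField E] [NormedAddCommGroup V] [NormedSpace E V]
  {h : V → V → E}

lemma mono {M N : ℝ} {v v' : V} (hv : BoundedConj h M v v') (hMN : M ≤ N) :
    BoundedConj h N v v' := by
  obtain ⟨γ, h1, h2, h3⟩ := hv
  exact ⟨γ, h1, h2.trans hMN, h3⟩

lemma trans {M N : ℝ} {u v w : V} (h₁ : BoundedConj h M u v) (h₂ : BoundedConj h N v w) :
    BoundedConj h (N * M) u w := by
  obtain ⟨γ, h1, h2, h3⟩ := h₁
  obtain ⟨δ, k1, k2, k3⟩ := h₂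
  refine ⟨δ.comp γ, fun x y => by simp [h1, k1], ?_, by simp [h3, k3]⟩
  exact (δ.opNorm_comp_le γ).trans
    (mul_le_mul k2 h2 (norm_nonneg _) ((norm_nonneg _).trans k2))

end BoundedConj

namespace IsHermitianForm

section Topology

variable {E V : Type*} [NontriviallyNormedField E] [NormedAddCommGroup V] [NormedSpace E V]
  {σ : E ≃+* E} {h : V → V → E}

lemma eq_sum_repr (H : IsHermitianForm σ h) {ι : Type*} [Fintype ι] (b : Module.Basis ι E V)
    (u v : V) : h u v = ∑ j, σ (b.repr v j) * h u (b j) := by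
  conv_lhs => rw [← b.sum_repr v]
  simp only [H.sum_right, H.smul_right]

/-- The linear functional `h · v`. -/
def leftLinear (H : IsHermitianForm σ h) (v : V) : V →ₗ[E] E where
  toFun u := h u v
  map_add' u u' := H.add_left u u' v
  map_smul' a u := H.smul_left a u v

lemma boundedConj_of_le_norm_sub (H : IsHermitianForm σ h) {C : ℝ} (hC : 0 < C)
    (hbd : ∀ u v, ‖h u v‖ ≤ C * ‖u‖ * ‖v‖) {ν : E} {v v' : V} (hv : h v v = ν)
    (hv' : h v' v' = ν) {D c : ℝ} (hc : 0 < c) (hvD : ‖v‖ ≤ D) (hvD' : ‖v'‖ ≤ D)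
    (hcν : c ≤ ‖ν - h v v'‖) : BoundedConj h (1 + C * (2 * D) ^ 2 / c) v v' := by
  have hvs : h v (v - v') = ν - h v v' := by rw [H.sub_right, hv]
  have hne : h v (v - v') ≠ 0 := by
    rw [hvs, ← norm_pos_iff]; linarith
  have hD : 0 ≤ D := (norm_nonneg v).trans hvD
  have hs : ‖v - v'‖ ≤ 2 * D := (norm_sub_le _ _).trans (by linarith)
  let g : V →ₗ[E] V :=
    LinearMap.id - ((h v (v - v'))⁻¹ • H.leftLinear (v - v')).smulRight (v - v')
  have hg : ∀ x, g x = x - (h x (v - v') / h v (v - v')) • (v - v') := by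
    intro x
    simp [g, leftLinear, div_eq_inv_mul]
  have hgb : ∀ x, ‖g x‖ ≤ (1 + C * (2 * D) ^ 2 / c) * ‖x‖ := by
    intro x
    rw [hg]
    have h1 : ‖h x (v - v')‖ ≤ C * ‖x‖ * (2 * D) := (hbd _ _).trans (by gcongr)
    have h2 : ‖h x (v - v') / h v (v - v')‖ ≤ C * ‖x‖ * (2 * D) / c := by
      rw [norm_div]
      gcongr
      rwa [hvs]
    calc _ ≤ ‖x‖ + ‖(h x (v - v') / h v (v - v')) • (v - v')‖ := norm_sub_le _ _
      _ ≤ ‖x‖ + C * ‖x‖ * (2 * D) / c * (2 * D) := by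
        rw [norm_smul]; gcongr
      _ = _ := by ring
  refine ⟨g.mkContinuous _ hgb, fun x y => ?_, g.mkContinuous_norm_le (by positivity) hgb, ?_⟩
  · simp only [LinearMap.mkContinuous_apply, hg]
    exact H.quasiReflection_isometry (hv.trans hv'.symm) hne x y
  · simp only [LinearMap.mkContinuous_apply, hg]
    rw [div_self hne, one_smul, sub_sub_cancel]

lemma boundedConj_of_intermediate (H : IsHermitianForm σ h) {C : ℝ} (hC : 0 < C)
    (hbd : ∀ u v, ‖h u v‖ ≤ C * ‖u‖ * ‖v‖) {ν : E} {v v' z : V} (hv : h v v = ν)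
    (hv' : h v' v' = ν) (hz : h z z = ν) {D c : ℝ} (hc : 0 < c) (hvD : ‖v‖ ≤ D)
    (hvD' : ‖v'‖ ≤ D) (hzD : ‖z‖ ≤ D) (h1 : c ≤ ‖ν - h v z‖) (h2 : c ≤ ‖ν - h z v'‖) :
    BoundedConj h ((1 + C * (2 * D) ^ 2 / c) * (1 + C * (2 * D) ^ 2 / c)) v v' :=
  (H.boundedConj_of_le_norm_sub hC hbd hv hz hc hvD hzD h1).trans
    (H.boundedConj_of_le_norm_sub hC hbd hz hv' hc hzD hvD' h2)

variable [CompleteSpace E] [FiniteDimensional E V]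

lemma continuous_left (H : IsHermitianForm σ h) (v : V) : Continuous fun u => h u v :=
  (H.leftLinear v).continuous_of_finiteDimensional

lemma continuous_form (H : IsHermitianForm σ h) (hσ : ∀ x, ‖σ x‖ = ‖x‖) :
    Continuous fun p : V × V => h p.1 p.2 := by
  let b := Module.finBasis E V
  have hσc : Continuous σ := (AddMonoidHomClass.isometry_of_norm σ hσ).continuous
  have hco : ∀ j, Continuous fun v => b.repr v j := fun j =>
    (b.coord j).continuous_of_finiteDimensional
  have hl := fun j => H.continuous_left (b j)
  have heq : (fun p : V × V => h p.1 p.2) =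
      fun p => ∑ j, σ (b.repr p.2 j) * h p.1 (b j) := by
    funext p
    exact H.eq_sum_repr b p.1 p.2
  rw [heq]
  exact continuous_finsetSum _ fun j _ =>
    (hσc.comp ((hco j).comp continuous_snd)).mul ((hl j).comp continuous_fst)

lemma exists_bound (H : IsHermitianForm σ h) (hσ : ∀ x, ‖σ x‖ = ‖x‖) :
    ∃ C : ℝ, 0 < C ∧ ∀ u v, ‖h u v‖ ≤ C * ‖u‖ * ‖v‖ := by
  let b := Module.finBasis E V
  let f := fun j => LinearMap.toContinuousLinearMap (b.coord j)
  let g := fun j => LinearMap.toContinuousLinearMap (H.leftLinear (b j))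
  refine ⟨(∑ j, ‖f j‖ * ‖g j‖) + 1, by positivity, fun u v => ?_⟩
  calc ‖h u v‖ = ‖∑ j, σ (b.repr v j) * h u (b j)‖ := by rw [← H.eq_sum_repr b]
    _ ≤ ∑ j, ‖σ (b.repr v j) * h u (b j)‖ := norm_sum_le _ _
    _ ≤ ∑ j, (‖f j‖ * ‖g j‖) * (‖u‖ * ‖v‖) := by
      refine Finset.sum_le_sum fun j _ => ?_
      rw [norm_mul, hσ]
      have h1 : ‖b.repr v j‖ ≤ ‖f j‖ * ‖v‖ := (f j).le_opNorm v
      have h2 : ‖h u (b j)‖ ≤ ‖g j‖ * ‖u‖ := (g j).le_opNorm u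
      calc _ ≤ (‖f j‖ * ‖v‖) * (‖g j‖ * ‖u‖) := by gcongr
        _ = _ := by ring
    _ = (∑ j, ‖f j‖ * ‖g j‖) * (‖u‖ * ‖v‖) := by rw [Finset.sum_mul]
    _ ≤ ((∑ j, ‖f j‖ * ‖g j‖) + 1) * (‖u‖ * ‖v‖) := by gcongr; linarith
    _ = _ := by ring

/-- Vectors of the same norm in a bounded region are conjugate by uniformly bounded
isometries. -/
lemma exists_boundedConj_of_norm_le [CharZero E] (H : IsHermitianForm σ h)
    (hσ : ∀ x, ‖σ x‖ = ‖x‖) (hnt : ∃ x, σ x ≠ x) {ν : E} (hν : ν ≠ 0) (D : ℝ) :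
    ∃ M : ℝ, ∀ v v' : V, h v v = ν → h v' v' = ν → ‖v‖ ≤ D → ‖v'‖ ≤ D →
      BoundedConj h M v v' := by
  obtain ⟨C, hC, hbd⟩ := H.exists_bound hσ
  obtain ⟨ε, hε, hε1, hε2⟩ := H.exists_norm_one hnt
  have hnorm : ‖ε‖ = 1 := by
    have h1 := congrArg norm hε
    rw [norm_mul, hσ, norm_one] at h1
    nlinarith [norm_nonneg ε]
  let c := min ‖2 * ν‖ (min ‖ν - σ ε * ν‖ (‖ν * (1 + ε)‖ / 2))
  have hc : 0 < c := by
    refine lt_min (by simpa using hν) (lt_min ?_ ?_)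
    · rw [norm_pos_iff, ← one_sub_mul]
      refine mul_ne_zero (sub_ne_zero.2 fun h0 => hε1 ?_) hν
      rw [← h0, one_mul] at hε
      exact hε
    · exact half_pos (norm_pos_iff.2 (mul_ne_zero hν hε2))
  refine ⟨(1 + C * (2 * D) ^ 2 / c) * (1 + C * (2 * D) ^ 2 / c),
    fun v v' hv hv' hvD hvD' => ?_⟩
  have main : ∀ ω : E, σ ω * ω = 1 → ‖ω‖ = 1 → c ≤ ‖ν - σ ω * ν‖ → c ≤ ‖ν - ω * h v v'‖ →
      BoundedConj h ((1 + C * (2 * D) ^ 2 / c) * (1 + C * (2 * D) ^ 2 / c)) v v' := by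
    intro ω h1 h2 h3 h4
    refine H.boundedConj_of_intermediate hC hbd (z := ω • v) hv hv' ?_ hc hvD hvD' ?_ ?_ ?_
    · rw [H.smul_left, H.smul_right, hv]
      linear_combination ν * h1
    · rwa [norm_smul, h2, one_mul]
    · rwa [H.smul_right, hv]
    · rwa [H.smul_left]
  by_cases hcase : c ≤ ‖ν - (-1) * h v v'‖
  · refine main (-1) (by simp) (by simp) ?_ hcase
    have h0 : ν - σ (-1) * ν = 2 * ν := by rw [map_neg, map_one]; ring
    rw [h0]
    exact min_le_left _ _
  · refine main ε hε hnorm ((min_le_right _ _).trans (min_le_left _ _)) ?_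
    have h1 : ‖ν * (1 + ε)‖ ≤ ‖ν - (-1) * h v v'‖ + ‖ν - ε * h v v'‖ := by
      calc ‖ν * (1 + ε)‖ = ‖ε * (ν - (-1) * h v v') + (ν - ε * h v v')‖ := by
            congr 1; ring
        _ ≤ ‖ε * (ν - (-1) * h v v')‖ + ‖ν - ε * h v v'‖ := norm_add_le _ _
        _ = _ := by rw [norm_mul, hnorm, one_mul]
    have h2 : c ≤ ‖ν * (1 + ε)‖ / 2 := (min_le_right _ _).trans (min_le_right _ _)
    push Not at hcase
    linarith

/-- On a closed cone where the form is anisotropic, `‖h v v‖` controls `‖v‖ ^ 2`. -/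
lemma exists_anisotropic_bound [ProperSpace V] (H : IsHermitianForm σ h)
    (hσ : ∀ x, ‖σ x‖ = ‖x‖) {S : Set V} (hS : IsClosed S)
    (hsmul : ∀ (a : E), ∀ v ∈ S, a • v ∈ S) (han : ∀ v ∈ S, v ≠ 0 → h v v ≠ 0) :
    ∃ c : ℝ, 0 < c ∧ ∀ v ∈ S, c * ‖v‖ ^ 2 ≤ ‖h v v‖ := by
  obtain ⟨a, ha⟩ := NormedField.exists_one_lt_norm E
  have hcpt : IsCompact ((Metric.closedBall (0 : V) 1 \ Metric.ball 0 (1 / ‖a‖)) ∩ S) :=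
    ((isCompact_closedBall _ _).diff Metric.isOpen_ball).inter_right hS
  have hcont : Continuous fun v => ‖h v v‖ :=
    ((H.continuous_form hσ).comp (continuous_id.prodMk continuous_id)).norm
  obtain ⟨c, hc, hcb⟩ := hcpt.exists_forall_le' hcont.continuousOn (a := 0) (by
    rintro v ⟨⟨-, hv⟩, hvS⟩
    refine norm_pos_iff.2 (han v hvS ?_)
    rintro rfl
    exact hv (Metric.mem_ball_self (by positivity)))
  refine ⟨c, hc, fun v hv => ?_⟩
  by_cases hv0 : v = 0
  · simp [hv0]
  obtain ⟨d, hd0, hd1, hd2, -⟩ := rescale_to_shell ha one_pos hv0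
  have h1 := hcb (d • v) ⟨⟨by simpa using hd1.le, by simpa using hd2⟩, hsmul d v hv⟩
  rw [H.smul_left, H.smul_right, norm_mul, norm_mul, hσ] at h1
  rw [norm_smul] at hd1
  have hdp : 0 < ‖d‖ := norm_pos_iff.2 hd0
  have h2 : (‖d‖ * ‖v‖) ^ 2 ≤ 1 := by
    have : 0 ≤ ‖d‖ * ‖v‖ := by positivity
    nlinarith
  have h3 : ‖d‖ ^ 2 * (c * ‖v‖ ^ 2) ≤ ‖d‖ ^ 2 * ‖h v v‖ := by nlinarith
  exact le_of_mul_le_mul_left h3 (by positivity)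

/-- Uniform choice of hyperbolic pairs transversal to two vectors of an annulus. -/
lemma exists_uniform_hyperbolic_pair [CharZero E] [ProperSpace V] (H : IsHermitianForm σ h)
    (hnt : ∃ x, σ x ≠ x) (hnd : ∀ u, (∀ v, h u v = 0) → u = 0)
    {e₀ : V} (he0 : e₀ ≠ 0) (he : h e₀ e₀ = 0) (m : E) {r : ℝ} (hr : 0 < r) (R : ℝ) :
    ∃ M : ℝ, 0 < M ∧ ∀ x y : V, r ≤ ‖x‖ → ‖x‖ ≤ R → r ≤ ‖y‖ → ‖y‖ ≤ R →
      ∃ e f : V, h e e = 0 ∧ h f f = 0 ∧ h e f = m ∧ ‖e‖ ≤ M ∧ ‖f‖ ≤ M ∧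
        M⁻¹ ≤ ‖h x e‖ ∧ M⁻¹ ≤ ‖h y e‖ := by
  let A : Set V := Metric.closedBall 0 R \ Metric.ball 0 r
  have hA : IsCompact A := (isCompact_closedBall _ _).diff Metric.isOpen_ball
  have hA0 : ∀ x ∈ A, x ≠ 0 := by
    rintro x ⟨-, hx⟩ rfl
    exact hx (Metric.mem_ball_self hr)
  let P : Set (V × V) → Prop := fun S => ∃ M : ℝ, 0 < M ∧ ∀ p ∈ S,
      ∃ e f : V, h e e = 0 ∧ h f f = 0 ∧ h e f = m ∧ ‖e‖ ≤ M ∧ ‖f‖ ≤ M ∧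
        M⁻¹ ≤ ‖h p.1 e‖ ∧ M⁻¹ ≤ ‖h p.2 e‖
  have main : P (A ×ˢ A) := by
    refine (hA.prod hA).induction_on (p := P) ⟨1, one_pos, by simp⟩ ?_ ?_ ?_
    · rintro s t hst ⟨M, hM, hP⟩
      exact ⟨M, hM, fun p hp => hP p (hst hp)⟩
    · rintro s t ⟨M, hM, hP⟩ ⟨N, hN, hQ⟩
      refine ⟨max M N, lt_max_of_lt_left hM, ?_⟩
      have hl : (max M N)⁻¹ ≤ M⁻¹ := by gcongr; exact le_max_left _ _
      have hr : (max M N)⁻¹ ≤ N⁻¹ := by gcongr; exact le_max_right _ _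
      rintro p (hp | hp)
      · obtain ⟨e, f, h1, h2, h3, h4, h5, h6, h7⟩ := hP p hp
        exact ⟨e, f, h1, h2, h3, h4.trans (le_max_left _ _), h5.trans (le_max_left _ _),
          hl.trans h6, hl.trans h7⟩
      · obtain ⟨e, f, h1, h2, h3, h4, h5, h6, h7⟩ := hQ p hp
        exact ⟨e, f, h1, h2, h3, h4.trans (le_max_right _ _), h5.trans (le_max_right _ _),
          hr.trans h6, hr.trans h7⟩
    · rintro ⟨x, y⟩ ⟨hx, hy⟩
      obtain ⟨e, hee, hxe, hye⟩ :=
        H.exists_isotropic_not_orthogonal_pair hnt hnd he0 he (hA0 x hx) (hA0 y hy)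
      have hene : e ≠ 0 := by
        rintro rfl
        exact hxe (H.zero_right x)
      obtain ⟨f, hff, hef⟩ := H.exists_hyperbolic_pair hnd hene hee m
      have hxe' : 0 < ‖h x e‖ := norm_pos_iff.2 hxe
      have hye' : 0 < ‖h y e‖ := norm_pos_iff.2 hye
      let δ := min ‖h x e‖ ‖h y e‖ / 2
      have hδ : 0 < δ := half_pos (lt_min hxe' hye')
      have hcont : Continuous fun u => ‖h u e‖ := (H.continuous_left e).norm
      refine ⟨{p | δ < ‖h p.1 e‖ ∧ δ < ‖h p.2 e‖}, mem_nhdsWithin_of_mem_nhds ?_, ?_⟩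
      · refine IsOpen.mem_nhds ((isOpen_lt continuous_const (hcont.comp continuous_fst)).inter
          (isOpen_lt continuous_const (hcont.comp continuous_snd))) ⟨?_, ?_⟩
        · exact (half_lt_self (lt_min hxe' hye')).trans_le (min_le_left _ _)
        · exact (half_lt_self (lt_min hxe' hye')).trans_le (min_le_right _ _)
      · let M := max δ⁻¹ (max ‖e‖ ‖f‖)
        have hM : 0 < M := lt_max_of_lt_left (inv_pos.2 hδ)
        have hMδ : M⁻¹ ≤ δ := inv_le_of_inv_le₀ hδ (le_max_left _ _)
        refine ⟨M, hM, fun p hp => ⟨e, f, hee, hff, hef, ?_, ?_, hMδ.trans hp.1.le,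
          hMδ.trans hp.2.le⟩⟩
        · exact (le_max_left _ _).trans (le_max_right _ _)
        · exact (le_max_right _ _).trans (le_max_right _ _)
  obtain ⟨M, hM, hP⟩ := main
  refine ⟨M, hM, fun x y hx1 hx2 hy1 hy2 => hP (x, y) ⟨⟨?_, ?_⟩, ⟨?_, ?_⟩⟩⟩ <;> simpa

/-- Far out in the cone, vectors of comparable size are conjugate by uniformly bounded
isometries. -/
lemma exists_boundedConj_smul [CharZero E] [ProperSpace V] (H : IsHermitianForm σ h)
    (hσ : ∀ x, ‖σ x‖ = ‖x‖) (hnt : ∃ x, σ x ≠ x) (hnd : ∀ u, (∀ v, h u v = 0) → u = 0)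
    {e₀ : V} (he0 : e₀ ≠ 0) (he : h e₀ e₀ = 0) {ν : E} (hν : σ ν = ν) {r : ℝ}
    (hr : 0 < r) (R : ℝ) :
    ∃ B M : ℝ, ∀ (t : E) (x y : V), B ≤ ‖t‖ → r ≤ ‖x‖ → ‖x‖ ≤ R → r ≤ ‖y‖ → ‖y‖ ≤ R →
      h (t • x) (t • x) = ν → h (t • y) (t • y) = ν → BoundedConj h M (t • x) (t • y) := by
  obtain ⟨C, hC, hbd⟩ := H.exists_bound hσ
  obtain ⟨K, hK, hpair⟩ := H.exists_uniform_hyperbolic_pair hnt hnd he0 he (ν / 2) hr R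
  let L := 2 * K * (‖ν‖ + C * |R| * K)
  have hL : 0 ≤ L := by positivity
  let Q := 2 * K + |R|
  refine ⟨1 + L, (1 + C * (2 * Q) ^ 2 / (2 * K)⁻¹) * (1 + C * (2 * Q) ^ 2 / (2 * K)⁻¹),
    fun t x y htB hx hxR hy hyR hvx hvy => ?_⟩
  have ht1 : 1 ≤ ‖t‖ := by linarith
  have htp : 0 < ‖t‖ := by linarith
  have ht0 : t ≠ 0 := norm_pos_iff.1 htp
  have hst0 : σ t ≠ 0 := (map_ne_zero σ).2 ht0
  have htL : L ≤ ‖t‖ ^ 2 := by nlinarith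
  obtain ⟨e, f, hee, hff, hef, heK, hfK, hxe, hye⟩ := hpair x y hx hxR hy hyR
  have hfe : h f e = ν / 2 := by rw [H.conj, hef, map_div₀, hν, map_ofNat]
  let z := t • e + (σ t)⁻¹ • f
  have hz : h z z = ν := by
    simp only [z, H.add_left, H.add_right, H.smul_left, H.smul_right, hee, hff, hef, hfe,
      map_inv₀, H.involutive]
    field_simp
    ring
  have hzn : ‖z‖ ≤ Q * ‖t‖ := by
    have h1 : ‖(σ t)⁻¹‖ ≤ ‖t‖ := by
      rw [norm_inv, hσ]
      exact (inv_le_one_of_one_le₀ ht1).trans ht1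
    calc ‖z‖ ≤ ‖t‖ * ‖e‖ + ‖(σ t)⁻¹‖ * ‖f‖ := by
          rw [← norm_smul, ← norm_smul]; exact norm_add_le _ _
      _ ≤ ‖t‖ * K + ‖t‖ * K := by gcongr
      _ ≤ Q * ‖t‖ := by nlinarith [abs_nonneg R, mul_nonneg (abs_nonneg R) htp.le]
  have hsize : ∀ u : V, ‖u‖ ≤ R → ‖t • u‖ ≤ Q * ‖t‖ := by
    intro u hu
    rw [norm_smul, mul_comm]
    gcongr
    linarith [le_abs_self R]
  have hsep : ∀ u : V, ‖u‖ ≤ R → K⁻¹ ≤ ‖h u e‖ →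
      (2 * K)⁻¹ * ‖t‖ ^ 2 ≤ ‖ν - h (t • u) z‖ := by
    intro u hu hue
    have h1 : h (t • u) z = t * σ t * h u e + h u f := by
      simp only [z, H.add_right, H.smul_left, H.smul_right, map_inv₀, H.involutive]
      field_simp
    have h2 : ‖t * σ t * h u e‖ ≤ ‖ν - h (t • u) z‖ + (‖ν‖ + ‖h u f‖) := by
      calc ‖t * σ t * h u e‖ = ‖(ν - h u f) - (ν - h (t • u) z)‖ := by
            rw [h1]; congr 1; ring
        _ ≤ ‖ν - h u f‖ + ‖ν - h (t • u) z‖ := norm_sub_le _ _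
        _ ≤ (‖ν‖ + ‖h u f‖) + ‖ν - h (t • u) z‖ := by gcongr; exact norm_sub_le _ _
        _ = _ := by ring
    have h3 : ‖h u f‖ ≤ C * |R| * K :=
      (hbd u f).trans (by gcongr; exact hu.trans (le_abs_self R))
    have h4 : ‖t‖ ^ 2 * K⁻¹ ≤ ‖t * σ t * h u e‖ := by
      rw [norm_mul, norm_mul, hσ, sq]; gcongr
    have h5 : ‖ν‖ + C * |R| * K ≤ (2 * K)⁻¹ * ‖t‖ ^ 2 := by
      rw [← div_eq_inv_mul, le_div_iff₀ (by positivity), mul_comm]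
      exact htL
    have h6 : ‖t‖ ^ 2 * K⁻¹ = (2 * K)⁻¹ * ‖t‖ ^ 2 + (2 * K)⁻¹ * ‖t‖ ^ 2 := by
      field_simp; ring
    linarith
  have hconst : C * (2 * (Q * ‖t‖)) ^ 2 / ((2 * K)⁻¹ * ‖t‖ ^ 2) =
      C * (2 * Q) ^ 2 / (2 * K)⁻¹ := by
    field_simp
  rw [← hconst]
  refine H.boundedConj_of_intermediate hC hbd hvx hvy hz (by positivity) (hsize x hxR)
    (hsize y hyR) hzn (hsep x hxR hxe) ?_
  have h7 : ν - h z (t • y) = σ (ν - h (t • y) z) := by rw [map_sub, hν, ← H.conj]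
  rw [h7, hσ]
  exact hsep y hyR hye

/-- Vectors of the same nonzero hermitian norm and of comparable size are conjugate by
uniformly bounded isometries. -/
lemma exists_boundedConj_of_comparable [CharZero E] [ProperSpace V] (H : IsHermitianForm σ h)
    (hσ : ∀ x, ‖σ x‖ = ‖x‖) (hnt : ∃ x, σ x ≠ x) (hnd : ∀ u, (∀ v, h u v = 0) → u = 0)
    {ν : E} (hν0 : ν ≠ 0) (hν : σ ν = ν) {κ : ℝ} (hκ : 1 ≤ κ) :
    ∃ M : ℝ, ∀ v v' : V, h v v = ν → h v' v' = ν → ‖v'‖ ≤ κ * ‖v‖ → ‖v‖ ≤ κ * ‖v'‖ →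
      BoundedConj h M v v' := by
  by_cases hiso : ∃ e₀ : V, e₀ ≠ 0 ∧ h e₀ e₀ = 0
  · obtain ⟨e₀, he0, he⟩ := hiso
    obtain ⟨a, ha⟩ := NormedField.exists_one_lt_norm E
    have hκ0 : 0 < κ := by linarith
    have hr : 0 < 1 / ‖a‖ / κ := by positivity
    obtain ⟨B, M, hBM⟩ := H.exists_boundedConj_smul hσ hnt hnd he0 he hν hr κ
    obtain ⟨N, hN⟩ := H.exists_boundedConj_of_norm_le hσ hnt hν0 (κ * B)
    refine ⟨max M N, fun v v' hv hv' h1 h2 => ?_⟩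
    have hv0 : v ≠ 0 := by
      rintro rfl
      exact hν0 (by rw [← hv, H.zero_left])
    obtain ⟨d, hd0, hd1, hd2, -⟩ := rescale_to_shell ha one_pos hv0
    have hdv : ‖d • v'‖ ≤ κ * ‖d • v‖ := by
      rw [norm_smul, norm_smul, mul_left_comm]; gcongr
    have hdv' : ‖d • v‖ ≤ κ * ‖d • v'‖ := by
      rw [norm_smul, norm_smul, mul_left_comm]; gcongr
    rcases le_total B ‖d⁻¹‖ with hB | hB
    · have h3 := hBM d⁻¹ (d • v) (d • v') hB
        ((div_le_self (by positivity) hκ).trans hd2) (hd1.le.trans hκ)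
        ((div_le_iff₀' hκ0).2 (hd2.trans hdv')) (by nlinarith)
      rw [inv_smul_smul₀ hd0, inv_smul_smul₀ hd0] at h3
      exact (h3 hv hv').mono (le_max_left _ _)
    · have h3 : ‖v‖ ≤ B := by
        rw [← inv_smul_smul₀ hd0 v, norm_smul]
        nlinarith [norm_nonneg d⁻¹]
      refine (hN v v' hv hv' ?_ (h1.trans (by gcongr))).mono (le_max_right _ _)
      nlinarith [norm_nonneg v]
  · push Not at hiso
    obtain ⟨c, hc, hcb⟩ := H.exists_anisotropic_bound hσ isClosed_univ (fun _ _ _ => trivial)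
      (fun v _ => hiso v)
    obtain ⟨N, hN⟩ := H.exists_boundedConj_of_norm_le hσ hnt hν0 (1 + ‖ν‖ / c)
    have hsmall : ∀ v : V, h v v = ν → ‖v‖ ≤ 1 + ‖ν‖ / c := by
      intro v hv
      have h1 := hcb v trivial
      rw [hv, mul_comm, ← le_div_iff₀ hc] at h1
      nlinarith [sq_nonneg (‖v‖ - 1)]
    exact ⟨N, fun v v' hv hv' _ _ => hN v v' hv hv' (hsmall v hv) (hsmall v' hv')⟩

end Topology

end IsHermitianForm

section Lattice

variable {E V : Type*} [NontriviallyNormedField E] [NormedAddCommGroup V] [NormedSpace E V]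
  {σ : E ≃+* E} {h : V → V → E}

lemma smul_mem_padVan (H : IsHermitianForm σ h) {l : ℕ} {w : ℕ → V} (a : E) {v : V}
    (hv : v ∈ PadVan E V h l w) : a • v ∈ PadVan E V h l w := fun i hi hle => by
  simp [H.smul_left, hv i hi hle]

/-- Vectors lying in the same multiples of a bounded neighbourhood of zero have comparable
norms. -/
lemma norm_le_of_mem_zpow_smul {πE : E} (hπ0 : πE ≠ 0) (hπ1 : ‖πE‖ < 1) {R : Set V}
    {C δ : ℝ} (hC : ∀ v ∈ R, ‖v‖ ≤ C) (hδ : 0 < δ)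
    (hδR : ∀ v : V, ‖v‖ ≤ δ → v ∈ R) {v v' : V} (hv : v ≠ 0)
    (hvv : ∀ n : ℤ, (∃ u ∈ R, v = πE ^ n • u) → ∃ u ∈ R, v' = πE ^ n • u) :
    ‖v'‖ ≤ C / (δ * ‖πE‖) * ‖v‖ := by
  have hπ : 0 < ‖πE‖ := norm_pos_iff.2 hπ0
  have hC0 : 0 ≤ C := (norm_nonneg _).trans (hC 0 (hδR 0 (by simpa using hδ.le)))
  obtain ⟨n, hn1, hn2⟩ := exists_mem_Ioc_zpow (x := ‖v‖ / δ) (y := ‖πE‖⁻¹)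
    (div_pos (norm_pos_iff.2 hv) hδ) ((one_lt_inv₀ hπ).2 hπ1)
  rw [inv_zpow', lt_div_iff₀ hδ] at hn1
  rw [inv_zpow', div_le_iff₀ hδ] at hn2
  obtain ⟨u, hu, hvu⟩ := hvv (-(n + 1)) ⟨(πE ^ (-(n + 1)))⁻¹ • v, hδR _ (by
    rw [norm_smul, norm_inv, norm_zpow, inv_mul_le_iff₀ (zpow_pos hπ _)]
    exact hn2), by rw [smul_inv_smul₀ (zpow_ne_zero _ hπ0)]⟩
  have hstep : ‖πE‖ ^ (-(n + 1)) = ‖πE‖ ^ (-n) / ‖πE‖ := by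
    rw [neg_add, ← sub_eq_add_neg, zpow_sub_one₀ hπ.ne', div_eq_mul_inv]
  rw [hvu, norm_smul, norm_zpow, hstep]
  calc ‖πE‖ ^ (-n) / ‖πE‖ * ‖u‖ ≤ (‖v‖ / δ) / ‖πE‖ * C := by
        gcongr
        · exact (le_div_iff₀ hδ).2 hn1.le
        · exact hC u hu
    _ = _ := by field_simp

lemma mem_padG_of_isometry [FiniteDimensional E V] (H : IsHermitianForm σ h) (hnd : ∀ u, (∀ v, h u v = 0) → u = 0)
    {γ : V →L[E] V} (hγ : ∀ x y, h (γ x) (γ y) = h x y) : γ ∈ PadG E V h := by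
  have hinj : Function.Injective (γ : V →ₗ[E] V) := by
    refine (injective_iff_map_eq_zero _).2 fun u hu => hnd u fun v => ?_
    have hu' : γ u = 0 := hu
    rw [← hγ, hu', H.zero_left]
  exact ⟨⟨hinj, LinearMap.surjective_of_injective hinj⟩, hγ⟩

variable [CompleteSpace E] [FiniteDimensional E V]

lemma isClosed_padVan (H : IsHermitianForm σ h) (l : ℕ) (w : ℕ → V) :
    IsClosed (PadVan E V h l w) := by
  have heq : PadVan E V h l w = ⋂ (i : ℕ) (_ : 1 ≤ i) (_ : i ≤ (l + 1) / 2),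
      {v | h v (w (2 * i - 2) + w (2 * i - 1)) = 0} ∩
        {v | h v (w (2 * i - 2) - w (2 * i - 1)) = 0} := by
    ext v
    simp [PadVan]
  rw [heq]
  exact isClosed_iInter fun i => isClosed_iInter fun _ => isClosed_iInter fun _ =>
    (isClosed_eq (H.continuous_left _) continuous_const).inter
      (isClosed_eq (H.continuous_left _) continuous_const)

/-- `R₀` is bounded. -/
lemma exists_padR0_norm_le [ProperSpace V] (H : IsHermitianForm σ h) (hσ : ∀ x, ‖σ x‖ = ‖x‖)
    {πE : E} (hπ0 : πE ≠ 0) (hπ1 : ‖πE‖ < 1) {valE : E → ℤ}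
    (hval : ∀ x : E, x ≠ 0 → ‖x‖ = ‖πE‖ ^ valE x) (ν : E) (l : ℕ) (w : ℕ → V)
    (han : ∀ v ∈ PadVan E V h l w, v ≠ 0 → h v v ≠ 0) :
    ∃ C : ℝ, 0 < C ∧ ∀ v ∈ PadR0 E V h l w valE ν, ‖v‖ ≤ C := by
  obtain ⟨c, hc, hcb⟩ := H.exists_anisotropic_bound hσ (isClosed_padVan H l w)
    (fun a v hv => smul_mem_padVan H a hv) han
  have hπ : 0 < ‖πE‖ := norm_pos_iff.2 hπ0
  let q := ‖πE‖ ^ (valE ν - 1)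
  have hq : 0 < q := zpow_pos hπ _
  refine ⟨(∑ i ∈ Finset.Icc 1 ((l + 1) / 2), ‖w (2 * i - 2) + w (2 * i - 1)‖) +
    (∑ i ∈ Finset.Icc 1 ((l + 1) / 2), ‖w (2 * i - 2) - w (2 * i - 1)‖) + (1 + q / c),
    by positivity, ?_⟩
  rintro v ⟨a, b, x, ⟨hx, hx'⟩, ha, hb, rfl⟩
  have hsum : ∀ (a : ℕ → E) (u : ℕ → V), (∀ i, ‖a i‖ ≤ 1) →
      ‖∑ i ∈ Finset.Icc 1 ((l + 1) / 2), a i • u i‖ ≤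
        ∑ i ∈ Finset.Icc 1 ((l + 1) / 2), ‖u i‖ := fun a u ha =>
    norm_sum_le_of_le _ fun i _ => by
      rw [norm_smul]
      exact mul_le_of_le_one_left (norm_nonneg _) (ha i)
  have hxn : ‖x‖ ≤ 1 + q / c := by
    by_cases hx0 : x = 0
    · rw [hx0, norm_zero]; positivity
    have h1 : ‖h x x‖ ≤ q := by
      rw [hval _ (han x hx hx0)]
      exact (zpow_le_zpow_iff_right_of_lt_one₀ hπ hπ1).2 (hx'.resolve_left hx0)
    have h2 : ‖x‖ ^ 2 ≤ q / c := by
      rw [le_div_iff₀ hc, mul_comm]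
      exact (hcb x hx).trans h1
    nlinarith [sq_nonneg (‖x‖ - 1)]
  exact norm_add₃_le.trans (add_le_add (add_le_add (hsum _ _ ha) (hsum _ _ hb)) hxn)

/-- `R₀` contains a neighbourhood of zero. -/
lemma exists_mem_padR0_of_norm_le [CharZero E] (H : IsHermitianForm σ h)
    (hσ : ∀ x, ‖σ x‖ = ‖x‖) {πE : E} (hπ0 : πE ≠ 0) (hπ1 : ‖πE‖ < 1) {valE : E → ℤ}
    (hval : ∀ x : E, x ≠ 0 → ‖x‖ = ‖πE‖ ^ valE x) {ν : E} (hν : ν ≠ 0) {l : ℕ} {w : ℕ → V}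
    (horth : ∀ i ≤ l, ∀ j ≤ l, i ≠ j → h (w i) (w j) = 0)
    (hvalw : ∀ i ≤ l, h (w i) (w i) = (-1 : E) ^ i * ν)
    (han : ∀ v ∈ PadVan E V h l w, v ≠ 0 → h v v ≠ 0) :
    ∃ δ : ℝ, 0 < δ ∧ ∀ v : V, ‖v‖ ≤ δ → v ∈ PadR0 E V h l w valE ν := by
  have hπ : 0 < ‖πE‖ := norm_pos_iff.2 hπ0
  let q := ‖πE‖ ^ (valE ν - 1)
  have hq : 0 < q := zpow_pos hπ _
  let s := Finset.Icc 1 ((l + 1) / 2)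
  let up : ℕ → V := fun i => w (2 * i - 2) + w (2 * i - 1)
  let um : ℕ → V := fun i => w (2 * i - 2) - w (2 * i - 1)
  let a : V → ℕ → E := fun v i => if i ∈ s then h v (um i) / (2 * ν) else 0
  let b : V → ℕ → E := fun v i => if i ∈ s then h v (up i) / (2 * ν) else 0
  let x : V → V := fun v => v - (∑ i ∈ s, a v i • up i) - ∑ i ∈ s, b v i • um i
  have h2ν : 2 * ν ≠ 0 := mul_ne_zero two_ne_zero hν
  have hxvan : ∀ v, x v ∈ PadVan E V h l w := by
    have hgram : ∀ i ∈ s, ∀ j ∈ s, h (up i) (up j) = 0 ∧ h (um i) (um j) = 0 ∧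
        h (up i) (um j) = (if i = j then 2 * ν else 0) ∧
        h (um i) (up j) = (if i = j then 2 * ν else 0) := by
      intro i hi j hj
      have hi' := Finset.mem_Icc.1 hi
      have hj' := Finset.mem_Icc.1 hj
      have e1 : h (w (2 * i - 2)) (w (2 * j - 2)) = if i = j then ν else 0 := by
        split_ifs with hij
        · subst hij
          rw [hvalw _ (by omega), (show Even (2 * i - 2) from ⟨i - 1, by omega⟩).neg_one_pow,
            one_mul]
        · exact horth _ (by omega) _ (by omega) (by omega)
      have e2 : h (w (2 * i - 1)) (w (2 * j - 1)) = if i = j then -ν else 0 := by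
        split_ifs with hij
        · subst hij
          rw [hvalw _ (by omega), (show Odd (2 * i - 1) from ⟨i - 1, by omega⟩).neg_one_pow,
            neg_one_mul]
        · exact horth _ (by omega) _ (by omega) (by omega)
      have e3 : h (w (2 * i - 2)) (w (2 * j - 1)) = 0 :=
        horth _ (by omega) _ (by omega) (by omega)
      have e4 : h (w (2 * i - 1)) (w (2 * j - 2)) = 0 :=
        horth _ (by omega) _ (by omega) (by omega)
      simp only [up, um, H.add_left, H.add_right, H.sub_left, H.sub_right, e1, e2, e3, e4]
      split_ifs
      · refine ⟨?_, ?_, ?_, ?_⟩ <;> ring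
      · simp
    have hexp : ∀ v u, h (x v) u =
        h v u - ∑ i ∈ s, a v i * h (up i) u - ∑ i ∈ s, b v i * h (um i) u := by
      intro v u
      simp only [x, H.sub_left, H.sum_left, H.smul_left]
    intro v j hj1 hj2
    have hj : j ∈ s := Finset.mem_Icc.2 ⟨hj1, hj2⟩
    change h (x v) (up j) = 0 ∧ h (x v) (um j) = 0
    have hzero : ∀ (c : ℕ → E) (u : ℕ → V) (y : V), (∀ i ∈ s, h (u i) y = 0) →
        ∑ i ∈ s, c i * h (u i) y = 0 := fun c u y hu =>
      Finset.sum_eq_zero fun i hi => by rw [hu i hi, mul_zero]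
    have hsingle : ∀ (c : ℕ → E) (u : ℕ → V) (y : V),
        (∀ i ∈ s, h (u i) y = if i = j then 2 * ν else 0) →
        ∑ i ∈ s, c i * h (u i) y = c j * (2 * ν) := fun c u y hu => by
      rw [Finset.sum_congr rfl fun i hi => congrArg (c i * ·) (hu i hi)]
      simp [hj]
    rw [hexp, hexp, hzero (a v) up _ fun i hi => (hgram i hi j hj).1,
      hzero (b v) um _ fun i hi => (hgram i hi j hj).2.1,
      hsingle (a v) up _ fun i hi => (hgram i hi j hj).2.2.1,
      hsingle (b v) um _ fun i hi => (hgram i hi j hj).2.2.2]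
    simp only [a, b, if_pos hj, div_mul_cancel₀ _ h2ν, sub_zero, sub_self, and_self]
  have hac : ∀ i, Continuous fun v => a v i := fun i => by
    by_cases hi : i ∈ s
    · simpa [a, hi] using (H.continuous_left (um i)).div_const (2 * ν)
    · simpa [a, hi] using continuous_const
  have hbc : ∀ i, Continuous fun v => b v i := fun i => by
    by_cases hi : i ∈ s
    · simpa [b, hi] using (H.continuous_left (up i)).div_const (2 * ν)
    · simpa [b, hi] using continuous_const
  have hxc : Continuous x :=
    (continuous_id.sub (continuous_finsetSum _ fun i _ => (hac i).smul continuous_const)).sub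
      (continuous_finsetSum _ fun i _ => (hbc i).smul continuous_const)
  have hhc : Continuous fun v => h (x v) (x v) := (H.continuous_form hσ).comp (hxc.prodMk hxc)
  have ha0 : ∀ i, a 0 i = 0 := fun i => by simp [a, H.zero_left]
  have hb0 : ∀ i, b 0 i = 0 := fun i => by simp [b, H.zero_left]
  have hx0 : x 0 = 0 := by simp [x, ha0, hb0]
  have hev : ∀ᶠ v in nhds (0 : V), (∀ i ∈ s, ‖a v i‖ < 1) ∧ (∀ i ∈ s, ‖b v i‖ < 1) ∧
      ‖h (x v) (x v)‖ < q := by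
    refine Filter.Eventually.and ?_ (Filter.Eventually.and ?_ ?_)
    · exact (Filter.eventually_all_finset s).2 fun i _ =>
        (hac i).norm.continuousAt.eventually_lt continuousAt_const (by simp [ha0])
    · exact (Filter.eventually_all_finset s).2 fun i _ =>
        (hbc i).norm.continuousAt.eventually_lt continuousAt_const (by simp [hb0])
    · exact hhc.norm.continuousAt.eventually_lt continuousAt_const
        (by simpa [hx0, H.zero_left] using hq)
  obtain ⟨δ, hδ, hball⟩ := Metric.eventually_nhds_iff_ball.1 hev
  refine ⟨δ / 2, half_pos hδ, fun v hv => ?_⟩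
  obtain ⟨h1, h2, h3⟩ := hball v (by rw [mem_ball_zero_iff]; linarith)
  refine ⟨a v, b v, x v, ⟨hxvan v, ?_⟩, fun i => ?_, fun i => ?_, ?_⟩
  · refine or_iff_not_imp_left.2 fun hne => ?_
    rw [hval _ (han _ (hxvan v) hne)] at h3
    exact (zpow_le_zpow_iff_right_of_lt_one₀ hπ hπ1).1 h3.le
  · by_cases hi : i ∈ s
    · exact (h1 i hi).le
    · simp [a, hi]
  · by_cases hi : i ∈ s
    · exact (h2 i hi).le
    · simp [b, hi]
  · simp only [x, s, up, um]
    abel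

/-- The isometries of norm at most `M` form a compact set. -/
lemma isCompact_isometries [ProperSpace (V →L[E] V)] (H : IsHermitianForm σ h)
    (hσ : ∀ x, ‖σ x‖ = ‖x‖) (M : ℝ) :
    IsCompact {γ : V →L[E] V | (∀ x y, h (γ x) (γ y) = h x y) ∧ ‖γ‖ ≤ M} := by
  have hcl : IsClosed {γ : V →L[E] V | ∀ x y, h (γ x) (γ y) = h x y} := by
    simp only [Set.ofPred_forall]
    refine isClosed_iInter fun x => isClosed_iInter fun y => isClosed_eq ?_ continuous_const
    have hx : ∀ z : V, Continuous fun γ : V →L[E] V => γ z := fun z => by fun_prop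
    exact (H.continuous_form hσ).comp ((hx x).prodMk (hx y))
  have heq : {γ : V →L[E] V | (∀ x y, h (γ x) (γ y) = h x y) ∧ ‖γ‖ ≤ M} =
      {γ : V →L[E] V | ∀ x y, h (γ x) (γ y) = h x y} ∩ Metric.closedBall 0 M := by
    ext γ
    simp
  rw [heq]
  exact (isCompact_closedBall (0 : V →L[E] V) M).inter_left hcl

end Lattice

/-- there is a compact subset `C₁` of `G₀` such that any two nonzero vectors
`v, v'` with `h(v,v) = h(v',v') = ν₀` and `val_{R₀}(v) = val_{R₀}(v')` (encoded as:
`v ∈ πE^n R₀ ↔ v' ∈ πE^n R₀` for every `n : ℤ`) are conjugate under `C₁`. -/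
theorem stmt_9 (E : Type*) [NontriviallyNormedField E] [CompleteSpace E] [CharZero E]
    (hna : ∀ x y : E, ‖x + y‖ ≤ max ‖x‖ ‖y‖)
    (hloc : IsCompact (Metric.closedBall (0 : E) 1))
    (πE : E) (hπ0 : πE ≠ 0) (hπ1 : ‖πE‖ < 1)
    (valE : E → ℤ) (hval : ∀ x : E, x ≠ 0 → ‖x‖ = ‖πE‖ ^ valE x) (hvalπ : valE πE = 1)
    (σ : E ≃+* E) (hσ2 : ∀ x : E, σ (σ x) = x) (hσnt : ∃ x : E, σ x ≠ x)
    (hσiso : ∀ x : E, ‖σ x‖ = ‖x‖)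
    (V₀ : Type*) [NormedAddCommGroup V₀] [NormedSpace E V₀] [FiniteDimensional E V₀]
    (h : V₀ → V₀ → E)
    (haddl : ∀ u u' v : V₀, h (u + u') v = h u v + h u' v)
    (hsmull : ∀ (a : E) (u v : V₀), h (a • u) v = a * h u v)
    (hconj : ∀ u v : V₀, h v u = σ (h u v))
    (hnd : ∀ u : V₀, (∀ v : V₀, h u v = 0) → u = 0)
    (ν₀ : E) (hν0 : ν₀ ≠ 0) (hνF : σ ν₀ = ν₀)
    (l : ℕ) (w : ℕ → V₀)
    (horth : ∀ i ≤ l, ∀ j ≤ l, i ≠ j → h (w i) (w j) = 0)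
    (hvalw : ∀ i ≤ l, h (w i) (w i) = (-1 : E) ^ i * ν₀)
    (han : ∀ v ∈ PadVan E V₀ h l w, v ≠ 0 → h v v ≠ 0) :
    ∃ C₁ : Set (V₀ →L[E] V₀), C₁ ⊆ PadG E V₀ h ∧ IsCompact C₁ ∧
      ∀ v v' : V₀, v ≠ 0 → v' ≠ 0 → h v v = ν₀ → h v' v' = ν₀ →
        (∀ n : ℤ, (∃ u ∈ PadR0 E V₀ h l w valE ν₀, v = πE ^ n • u) ↔
          (∃ u ∈ PadR0 E V₀ h l w valE ν₀, v' = πE ^ n • u)) →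
        ∃ γ ∈ C₁, γ v = v' := by
  have H : IsHermitianForm σ h := ⟨hσ2, haddl, hsmull, hconj⟩
  have : LocallyCompactSpace E := hloc.locallyCompactSpace_of_mem_nhds_of_addGroup
    (Metric.closedBall_mem_nhds (0 : E) one_pos)
  have : ProperSpace V₀ := FiniteDimensional.proper E V₀
  have : ProperSpace (V₀ →L[E] V₀) := FiniteDimensional.proper E _
  obtain ⟨C, hC0, hC⟩ := exists_padR0_norm_le H hσiso hπ0 hπ1 hval ν₀ l w han
  obtain ⟨δ, hδ, hδR⟩ :=
    exists_mem_padR0_of_norm_le H hσiso hπ0 hπ1 hval hν0 horth hvalw han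
  obtain ⟨M, hM⟩ := H.exists_boundedConj_of_comparable hσiso hσnt hnd hν0 hνF
    (le_max_left 1 (C / (δ * ‖πE‖)))
  refine ⟨{γ | (∀ x y, h (γ x) (γ y) = h x y) ∧ ‖γ‖ ≤ M},
    fun γ hγ => mem_padG_of_isometry H hnd hγ.1, isCompact_isometries H hσiso M, ?_⟩
  intro v v' hv hv' hvν hvν' hiff
  have h1 := norm_le_of_mem_zpow_smul hπ0 hπ1 hC hδ hδR hv fun n => (hiff n).1
  have h2 := norm_le_of_mem_zpow_smul hπ0 hπ1 hC hδ hδR hv' fun n => (hiff n).2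
  obtain ⟨γ, hγ, hγM, hγv⟩ := hM v v' hvν hvν'
    (h1.trans (by gcongr; exact le_max_right _ _)) (h2.trans (by gcongr; exact le_max_right _ _))
  exact ⟨γ, ⟨hγ, hγM⟩, hγv⟩
end
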